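/- For every integer n ≥ 3, as an identity in the field of rational functions ℚ(z1,z2,z3,z4), the alternative quadruply-refined ASM generating function at x = y = 1 satisfies: (z4·z1−z4+1)(z1·z2−z1+1)(z2·z3−z2+1)(z3·z4−z3+1)·Zbarqua_n(1,1;z1,z2,z3,z4) = ( z1·z2·z3·z4 / ( A_{n−2}·(z1−z3)(z2−z4) ) )·( (z1z2−z1+1)(z1z2−z2+1)(z3z4−z3+1)(z3z4−z4+1)·Zopp_{n−1}(1,1;z4,z1)·Zopp_{n−1}(1,1;z2,z3) − (z4z1−z4+1)(z4z1−z1+1)(z2z3−z2+1)(z2z3−z3+1)·Zopp_{n−1}(1,1;z1,z2)·Zopp_{n−1}(1,1;z3,z4) ) + (z2−1)(z3−1)(z1z2−z1+1)(z3z4−z3+1)·z4·z1·z2^{n−1}·Zopp_{n−1}(1,1;z4,z1) + (z3−1)(z4−1)(z2z3−z2+1)(z4z1−z4+1)·z1·z2·z3^{n−1}·Zopp_{n−1}(1,1;z1,z2) + (z4−1)(z1−1)(z3z4−z3+1)(z1z2−z1+1)·z2·z3·z4^{n−1}·Zopp_{n−1}(1,1;z2,z3) + (z1−1)(z2−1)(z4z1−z4+1)(z2z3−z2+1)·z3·z4·z1^{n−1}·Zopp_{n−1}(1,1;z3,z4)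 + (z1−1)(z2−1)(z3−1)(z4−1)·( (z1z2−z1+1)(z3z4−z3+1)·(z2·z4)^{n−1} + (z2z3−z2+1)(z4z1−z4+1)·(z1·z3)^{n−1} )·A_{n−2}, where A_m denotes the number of ASMs of size m. -/

import Mathlib

open Finset

/-- The `n × n` integer matrix encoded by `e`, with entries in `{-1, 0, 1}`. -/
def asmMat {n : ℕ} (e : Fin n → Fin n → Fin 3) : Fin n → Fin n → ℤ :=
  fun i j => (e i j : ℤ) - 1

/-- `A` is an alternating sign matrix: all entries lie in `{-1, 0, 1}`, every
partial row sum and every partial column sum is `0` or `1` (equivalently, the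
nonzero entries of each row and of each column alternate in sign), and every
complete row sum and column sum is `1`. -/
def IsASM {n : ℕ} (A : Fin n → Fin n → ℤ) : Prop :=
  (∀ i j, A i j = -1 ∨ A i j = 0 ∨ A i j = 1) ∧
  (∀ (i j : Fin n), (∑ j' ∈ univ.filter (fun j' : Fin n => j' ≤ j), A i j') = 0 ∨
    (∑ j' ∈ univ.filter (fun j' : Fin n => j' ≤ j), A i j') = 1) ∧
  (∀ (i j : Fin n), (∑ i' ∈ univ.filter (fun i' : Fin n => i' ≤ i), A i' j) = 0 ∨
    (∑ i' ∈ univ.filter (fun i' : Fin n => i' ≤ i), A i' j) = 1) ∧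
  (∀ i : Fin n, (∑ j, A i j) = 1) ∧
  (∀ j : Fin n, (∑ i, A i j) = 1)

/-- `ν(A)`, the number of generalized inversions of `A`. -/
def nuASM {n : ℕ} (A : Fin n → Fin n → ℤ) : ℕ :=
  (∑ i : Fin n, ∑ i' : Fin n, ∑ j : Fin n, ∑ j' : Fin n,
      if i < i' ∧ j' ≤ j then A i j * A i' j' else 0).toNat

/-- `μ(A)`, the number of entries of `A` equal to `-1`. -/
def muASM {n : ℕ} (A : Fin n → Fin n → ℤ) : ℕ :=
  (univ.filter (fun p : Fin n × Fin n => A p.1 p.2 = -1)).card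

/-- `ρT(A)`, the number of `0`'s to the left of the `1` in the top row of `A`. -/
def rhoT {n : ℕ} (A : Fin n → Fin n → ℤ) : ℕ :=
  (univ.filter (fun j : Fin n =>
    A ⟨0, j.pos⟩ j = 0 ∧ ∃ j' : Fin n, j < j' ∧ A ⟨0, j.pos⟩ j' = 1)).card

/-- `ρR(A)`, the number of `0`'s below the `1` in the right-most column of `A`. -/
def rhoR {n : ℕ} (A : Fin n → Fin n → ℤ) : ℕ :=
  (univ.filter (fun i : Fin n =>
    A i ⟨n - 1, Nat.sub_lt i.pos Nat.one_pos⟩ = 0 ∧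
      ∃ i' : Fin n, i' < i ∧ A i' ⟨n - 1, Nat.sub_lt i.pos Nat.one_pos⟩ = 1)).card

/-- `ρB(A)`, the number of `0`'s to the right of the `1` in the bottom row of `A`. -/
def rhoB {n : ℕ} (A : Fin n → Fin n → ℤ) : ℕ :=
  (univ.filter (fun j : Fin n =>
    A ⟨n - 1, Nat.sub_lt j.pos Nat.one_pos⟩ j = 0 ∧
      ∃ j' : Fin n, j' < j ∧ A ⟨n - 1, Nat.sub_lt j.pos Nat.one_pos⟩ j' = 1)).card

/-- `ρL(A)`, the number of `0`'s above the `1` in the left-most column of `A`. -/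
def rhoL {n : ℕ} (A : Fin n → Fin n → ℤ) : ℕ :=
  (univ.filter (fun i : Fin n =>
    A i ⟨0, i.pos⟩ = 0 ∧ ∃ i' : Fin n, i < i' ∧ A i' ⟨0, i.pos⟩ = 1)).card

open Classical in
/-- The quadruply-refined ASM generating function
`Zqua_n(x,y;z1,z2,z3,z4) = Σ_A x^{ν(A)} y^{μ(A)} z1^{ρT(A)} z2^{ρR(A)} z3^{ρB(A)} z4^{ρL(A)}`. -/
noncomputable def Zqua (n : ℕ) {R : Type*} [CommRing R] (x y z1 z2 z3 z4 : R) : R :=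
  ∑ e : Fin n → Fin n → Fin 3,
    if IsASM (asmMat e) then
      x ^ nuASM (asmMat e) * y ^ muASM (asmMat e) * z1 ^ rhoT (asmMat e) *
        z2 ^ rhoR (asmMat e) * z3 ^ rhoB (asmMat e) * z4 ^ rhoL (asmMat e)
    else 0

/-- Adjacent-boundary doubly-refined generating function `Zadj_n(x,y;z1,z2)`. -/
noncomputable def Zadj (n : ℕ) {R : Type*} [CommRing R] (x y z1 z2 : R) : R :=
  Zqua n x y z1 1 1 z2

/-- Alternative adjacent-boundary doubly-refined generating function `Zbaradj_n(x,y;z1,z2)`. -/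
noncomputable def Zbaradj (n : ℕ) {R : Type*} [CommRing R] (x y z1 z2 : R) : R :=
  Zqua n x y z1 z2 1 1

/-- Triply-refined generating function `Ztri_n(x,y;z1,z2,z3)`. -/
noncomputable def Ztri (n : ℕ) {R : Type*} [CommRing R] (x y z1 z2 z3 : R) : R :=
  Zqua n x y z1 1 z2 z3

/-- Opposite-boundary doubly-refined generating function `Zopp_n(x,y;z1,z2)`. -/
noncomputable def Zopp (n : ℕ) {R : Type*} [CommRing R] (x y z1 z2 : R) : R :=
  Zqua n x y z1 1 z2 1

/-- Singly-refined generating function `Z_n(x,y;z)`. -/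
noncomputable def Zsing (n : ℕ) {R : Type*} [CommRing R] (x y z : R) : R :=
  Zqua n x y z 1 1 1

/-- Unrefined generating function `Z_n(x,y)`.  Note `Zun 0 x y = 1`. -/
noncomputable def Zun (n : ℕ) {R : Type*} [CommRing R] (x y : R) : R :=
  Zqua n x y 1 1 1 1

open Classical in
/-- The alternative quadruply-refined ASM generating function
`Zbarqua_n(x,y;z1,z2,z3,z4)
  = Σ_A x^{ν(A)} y^{μ(A)} z1^{ρT(A)} z2^{n-1-ρR(A)} z3^{ρB(A)} z4^{n-1-ρL(A)}`. -/
noncomputable def Zbarqua (n : ℕ) {R : Type*} [CommRing R] (x y z1 z2 z3 z4 : R) : R :=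
  ∑ e : Fin n → Fin n → Fin 3,
    if IsASM (asmMat e) then
      x ^ nuASM (asmMat e) * y ^ muASM (asmMat e) * z1 ^ rhoT (asmMat e) *
        z2 ^ (n - 1 - rhoR (asmMat e)) * z3 ^ rhoB (asmMat e) *
        z4 ^ (n - 1 - rhoL (asmMat e))
    else 0

open Classical in
/-- `A_n`, the number of alternating sign matrices of size `n`. -/
noncomputable def numASM (n : ℕ) : ℕ :=
  (univ.filter (fun e : Fin n → Fin n → Fin 3 => IsASM (asmMat e))).card

/-- The field of rational functions over `ℚ` in 4 variables. -/
noncomputable abbrev K4 : Type := FractionRing (MvPolynomial (Fin 4) ℚ)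

noncomputable def vz1 : K4 := algebraMap (MvPolynomial (Fin 4) ℚ) K4 (MvPolynomial.X 0)
noncomputable def vz2 : K4 := algebraMap (MvPolynomial (Fin 4) ℚ) K4 (MvPolynomial.X 1)
noncomputable def vz3 : K4 := algebraMap (MvPolynomial (Fin 4) ℚ) K4 (MvPolynomial.X 2)
noncomputable def vz4 : K4 := algebraMap (MvPolynomial (Fin 4) ℚ) K4 (MvPolynomial.X 3)

/-- The sum of the entries of `f` at positions smaller than `k`. -/
def pre {n : ℕ} (f : Fin n → ℤ) (k : Fin (n + 1)) : ℤ :=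
  ∑ j ∈ univ.filter (fun j : Fin n => j.castSucc < k), f j

/-- The one-dimensional alternation condition satisfied by rows and columns of an ASM. -/
structure IsAlt {n : ℕ} (f : Fin n → ℤ) : Prop where
  pre_mem : ∀ k, pre f k = 0 ∨ pre f k = 1
  sum_eq : ∑ j, f j = 1

theorem pre_zero {n : ℕ} (f : Fin n → ℤ) : pre f 0 = 0 := by
  simp [pre]

theorem pre_last {n : ℕ} (f : Fin n → ℤ) : pre f (Fin.last n) = ∑ j, f j := by
  simp [pre, Fin.castSucc_lt_last]

theorem pre_succ {n : ℕ} (f : Fin n → ℤ) (j : Fin n) :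
    pre f j.succ = pre f j.castSucc + f j := by
  have : univ.filter (fun i : Fin n => i.castSucc < j.succ) =
      insert j (univ.filter (fun i : Fin n => i.castSucc < j.castSucc)) := by
    ext i
    simp only [Fin.castSucc_lt_succ_iff, mem_filter, mem_univ, true_and, mem_insert,
      Fin.castSucc_lt_castSucc_iff]
    exact le_iff_eq_or_lt
  rw [pre, pre, this, sum_insert (by simp), add_comm]

theorem pre_succ_eq_le {n : ℕ} (f : Fin n → ℤ) (j : Fin n) :
    pre f j.succ = ∑ j' ∈ univ.filter (fun j' : Fin n => j' ≤ j), f j' := by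
  simp [pre, Fin.castSucc_lt_succ_iff]

theorem isASM_iff {n : ℕ} (e : Fin n → Fin n → Fin 3) :
    IsASM (asmMat e) ↔
      (∀ i, IsAlt (asmMat e i)) ∧ (∀ j, IsAlt (fun i => asmMat e i j)) := by
  constructor
  · rintro ⟨-, hr, hc, hrs, hcs⟩
    refine ⟨fun i => ⟨fun k => ?_, hrs i⟩, fun j => ⟨fun k => ?_, hcs j⟩⟩
    · refine Fin.cases (Or.inl (pre_zero _)) (fun j => ?_) k
      rw [pre_succ_eq_le]; exact hr i j
    · refine Fin.cases (Or.inl (pre_zero _)) (fun i => ?_) k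
      rw [pre_succ_eq_le]; exact hc i j
  · rintro ⟨hr, hc⟩
    refine ⟨fun i j => ?_, fun i j => ?_, fun i j => ?_, fun i => (hr i).2, fun j => (hc j).2⟩
    · have h := (e i j).isLt
      simp only [asmMat]
      omega
    · rw [← pre_succ_eq_le]; exact (hr i).1 _
    · rw [← pre_succ_eq_le (fun i => asmMat e i j)]; exact (hc j).1 _

theorem pre_rev {n : ℕ} (f : Fin n → ℤ) (k : Fin (n + 1)) :
    pre (fun j => f j.rev) k + pre f k.rev = ∑ j, f j := by
  induction k using Fin.induction with
  | zero => simp [pre_zero, pre_last]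
  | succ j ih =>
    have h := pre_succ f j.rev
    rw [← Fin.rev_castSucc, ← Fin.rev_succ] at h
    rw [pre_succ]
    linarith

theorem IsAlt.rev {n : ℕ} {f : Fin n → ℤ} (h : IsAlt f) : IsAlt (fun j => f j.rev) := by
  refine ⟨fun k => ?_, ?_⟩
  · have h1 := pre_rev f k
    rw [h.sum_eq] at h1
    rcases h.pre_mem k.rev with h2 | h2 <;> omega
  · rw [← h.sum_eq]
    exact Equiv.sum_comp Fin.revPerm f

theorem pre_cons {n : ℕ} (x : ℤ) (f : Fin n → ℤ) (k : Fin (n + 1)) :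
    pre (Fin.cons x f : Fin (n + 1) → ℤ) k.succ = x + pre f k := by
  induction k using Fin.induction with
  | zero =>
    have := pre_succ (Fin.cons x f : Fin (n + 1) → ℤ) 0
    simp only [Fin.castSucc_zero, pre_zero, Fin.cons_zero] at this ⊢
    linarith
  | succ j ih =>
    have h1 := pre_succ (Fin.cons x f : Fin (n + 1) → ℤ) j.succ
    rw [h1, ← Fin.succ_castSucc, ih, Fin.cons_succ, pre_succ]
    ring

theorem isAlt_cons_zero {n : ℕ} (f : Fin n → ℤ) :
    IsAlt (Fin.cons 0 f : Fin (n + 1) → ℤ) ↔ IsAlt f := by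
  constructor
  · rintro ⟨h1, h2⟩
    refine ⟨fun k => ?_, ?_⟩
    · simpa [pre_cons] using h1 k.succ
    · simpa [Fin.sum_univ_succ] using h2
  · rintro ⟨h1, h2⟩
    refine ⟨fun k => ?_, ?_⟩
    · refine Fin.cases (Or.inl (pre_zero _)) (fun j => ?_) k
      simpa [pre_cons] using h1 j
    · simpa [Fin.sum_univ_succ] using h2

theorem pre_const_zero {n : ℕ} (k : Fin (n + 1)) : pre (fun _ : Fin n => (0 : ℤ)) k = 0 := by
  simp [pre]

theorem isAlt_cons_one {n : ℕ} :
    IsAlt (Fin.cons 1 (fun _ => 0) : Fin (n + 1) → ℤ) := by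
  refine ⟨fun k => ?_, ?_⟩
  · refine Fin.cases (Or.inl (pre_zero _)) (fun j => Or.inr ?_) k
    simp [pre_cons, pre_const_zero]
  · simp [Fin.sum_univ_succ]

section weights

variable {R : Type*} [CommRing R]

/-- The six-vertex weight of the entry `(i, j)` of `A`. -/
noncomputable def vw {n : ℕ} (a b c : Fin n → Fin n → R) (A : Fin n → Fin n → ℤ) (i j : Fin n) : R :=
  if A i j = 1 then 1 else if A i j = -1 then c i j else
    if pre (A i) j.succ = pre (fun i => A i j) i.succ then b i j else a i j

open Classical in
/-- The six-vertex partition function with domain-wall boundary conditions, as a sum over ASMs. -/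
noncomputable def pf {n : ℕ} (a b c : Fin n → Fin n → R) : R :=
  ∑ e : Fin n → Fin n → Fin 3,
    if IsASM (asmMat e) then ∏ i, ∏ j, vw a b c (asmMat e) i j else 0

theorem pf_transpose {n : ℕ} (a b c : Fin n → Fin n → R) :
    pf (fun i j => a j i) (fun i j => b j i) (fun i j => c j i) = pf a b c := by
  classical
  unfold pf
  refine Fintype.sum_equiv (Equiv.piComm _) _ _ (fun e => ?_)
  have h1 : IsASM (asmMat e) ↔ IsASM (asmMat (Equiv.piComm (fun _ _ : Fin n => Fin 3) e)) := by
    rw [isASM_iff, isASM_iff]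
    exact and_comm
  simp only [h1]
  refine if_congr Iff.rfl ?_ rfl
  rw [prod_comm]
  refine prod_congr rfl fun i _ => prod_congr rfl fun j _ => ?_
  exact if_congr Iff.rfl rfl (if_congr Iff.rfl rfl (if_congr eq_comm rfl rfl))

theorem IsASM.rowAlt {n : ℕ} {e : Fin n → Fin n → Fin 3} (h : IsASM (asmMat e)) (i : Fin n) :
    IsAlt (asmMat e i) := ((isASM_iff e).1 h).1 i

theorem IsASM.colAlt {n : ℕ} {e : Fin n → Fin n → Fin 3} (h : IsASM (asmMat e)) (j : Fin n) :
    IsAlt (fun i => asmMat e i j) := ((isASM_iff e).1 h).2 j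

theorem pf_flip {n : ℕ} (a b c : Fin n → Fin n → R) :
    pf (fun i j => b i.rev j) (fun i j => a i.rev j) (fun i j => c i.rev j) = pf a b c := by
  classical
  unfold pf
  have key : ∀ e : Fin n → Fin n → Fin 3, IsASM (asmMat e) →
      IsASM (asmMat (fun i j => e i.rev j)) := by
    intro e h
    exact (isASM_iff _).2 ⟨fun i => h.rowAlt i.rev, fun j => (h.colAlt j).rev⟩
  refine Fintype.sum_equiv (Equiv.arrowCongr Fin.revPerm (Equiv.refl _)) _ _ (fun e => ?_)
  have h0 : (Equiv.arrowCongr Fin.revPerm (Equiv.refl (Fin n → Fin 3))) e =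
      fun i j => e i.rev j := by
    ext i j; simp [Equiv.arrowCongr]
  rw [h0]
  by_cases h : IsASM (asmMat e)
  · rw [if_pos h, if_pos (key e h)]
    rw [← Equiv.prod_comp Fin.revPerm]
    refine prod_congr rfl fun i _ => prod_congr rfl fun j _ => ?_
    have hA : asmMat (fun i j => e i.rev j) i j = asmMat e i.rev j := rfl
    have hr : pre (asmMat (fun i j => e i.rev j) i) j.succ = pre (asmMat e i.rev) j.succ := rfl
    have hc : pre (fun i => asmMat (fun i j => e i.rev j) i j) i.succ =
        1 - pre (fun i => asmMat e i j) i.rev.castSucc := by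
      have := pre_rev (fun i => asmMat e i j) i.succ
      rw [(h.colAlt j).sum_eq, Fin.rev_succ] at this
      have h' : (fun i => asmMat (fun i j => e i.rev j) i j) =
        fun i => asmMat e i.rev j := rfl
      rw [h']
      linarith
    have hs := pre_succ (fun i => asmMat e i j) i.rev
    simp only [vw, Fin.revPerm_apply, hA, hr, hc]
    split_ifs with h1 h2 h3 h4 h4
    · simp
    · simp
    · exfalso
      have h5 := h.1 i.rev j
      have : asmMat e i.rev j = 0 := by tauto
      simp only [this] at hs
      rcases (h.colAlt j).pre_mem i.rev.succ with h6 | h6 <;> omega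
    · simp
    · simp
    · exfalso
      have h5 := h.1 i.rev j
      have : asmMat e i.rev j = 0 := by tauto
      simp only [this] at hs
      rcases (h.colAlt j).pre_mem i.rev.succ with h6 | h6 <;>
      rcases (h.rowAlt i.rev).pre_mem j.succ with h7 | h7 <;> omega
  · rw [if_neg h, if_neg]
    intro h'
    apply h
    have := key _ h'
    simpa using this

/-- The matrix obtained from `e` by adding a first row and a first column with corner entry `1`. -/
def border {n : ℕ} (e : Fin n → Fin n → Fin 3) : Fin (n + 1) → Fin (n + 1) → Fin 3 :=
  Fin.cons (Fin.cons 2 (fun _ => 1)) (fun i => Fin.cons 1 (e i))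

theorem asmMat_border_zero {n : ℕ} (e : Fin n → Fin n → Fin 3) :
    asmMat (border e) 0 = Fin.cons 1 (fun _ => 0) := by
  ext j
  refine Fin.cases ?_ (fun j => ?_) j <;> simp [asmMat, border]

theorem asmMat_border_succ {n : ℕ} (e : Fin n → Fin n → Fin 3) (i : Fin n) :
    asmMat (border e) i.succ = Fin.cons 0 (asmMat e i) := by
  ext j
  refine Fin.cases ?_ (fun j => ?_) j <;> simp [asmMat, border]

theorem asmMat_border_col_zero {n : ℕ} (e : Fin n → Fin n → Fin 3) :
    (fun i => asmMat (border e) i 0) = Fin.cons 1 (fun _ => 0) := by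
  ext j
  refine Fin.cases ?_ (fun j => ?_) j <;> simp [asmMat, border]

theorem asmMat_border_col_succ {n : ℕ} (e : Fin n → Fin n → Fin 3) (j : Fin n) :
    (fun i => asmMat (border e) i j.succ) = Fin.cons 0 (fun i => asmMat e i j) := by
  ext i
  refine Fin.cases ?_ (fun i => ?_) i <;> simp [asmMat, border]

theorem isASM_border {n : ℕ} (e : Fin n → Fin n → Fin 3) :
    IsASM (asmMat (border e)) ↔ IsASM (asmMat e) := by
  rw [isASM_iff, isASM_iff, Fin.forall_fin_succ, Fin.forall_fin_succ]
  simp only [asmMat_border_zero, asmMat_border_succ, asmMat_border_col_zero,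
    asmMat_border_col_succ, isAlt_cons_zero, isAlt_cons_one, true_and]

theorem border_injective {n : ℕ} : Function.Injective (border (n := n)) := by
  intro e e' h
  ext i j
  have := congrFun (congrFun h i.succ) j.succ
  simpa [border] using congrArg Fin.val this

theorem IsAlt.mem {n : ℕ} {f : Fin n → ℤ} (h : IsAlt f) (i : Fin n) :
    f i = -1 ∨ f i = 0 ∨ f i = 1 := by
  have := pre_succ f i
  rcases h.1 i.succ with h1 | h1 <;> rcases h.1 i.castSucc with h2 | h2 <;> omega

theorem IsAlt.zero_nonneg {n : ℕ} {f : Fin (n + 1) → ℤ} (h : IsAlt f) : 0 ≤ f 0 := by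
  have := pre_succ f 0
  rw [Fin.castSucc_zero, pre_zero] at this
  rcases h.1 (Fin.succ 0) with h1 | h1 <;> omega

theorem IsAlt.last_nonneg {n : ℕ} {f : Fin (n + 1) → ℤ} (h : IsAlt f) : 0 ≤ f (Fin.last n) := by
  have := pre_succ f (Fin.last n)
  rw [Fin.succ_last, pre_last, h.2] at this
  rcases h.1 (Fin.last n).castSucc with h1 | h1 <;> omega

theorem exists_border {n : ℕ} {e : Fin (n + 1) → Fin (n + 1) → Fin 3} (h : IsASM (asmMat e))
    (h0 : asmMat e 0 0 = 1) : ∃ e', border e' = e := by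
  refine ⟨fun i j => e i.succ j.succ, ?_⟩
  have hr : ∀ j : Fin n, asmMat e 0 j.succ = 0 := by
    have h1 := (h.rowAlt 0).sum_eq
    rw [Fin.sum_univ_succ, h0] at h1
    have h2 := (sum_eq_zero_iff_of_nonneg (s := univ) (f := fun j : Fin n => asmMat e 0 j.succ)
      (fun j _ => (h.colAlt j.succ).zero_nonneg)).1 (by linarith)
    exact fun j => h2 j (mem_univ _)
  have hc : ∀ i : Fin n, asmMat e i.succ 0 = 0 := by
    have h1 := (h.colAlt 0).sum_eq
    rw [Fin.sum_univ_succ, h0] at h1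
    have h2 := (sum_eq_zero_iff_of_nonneg (s := univ) (f := fun i : Fin n => asmMat e i.succ 0)
      (fun i _ => (h.rowAlt i.succ).zero_nonneg)).1 (by linarith)
    exact fun i => h2 i (mem_univ _)
  funext i j
  refine Fin.cases ?_ (fun i => ?_) i <;> refine Fin.cases ?_ (fun j => ?_) j
  · simp only [asmMat] at h0
    simp only [border, Fin.cons_zero]
    apply Fin.ext
    show 2 = _
    omega
  · have := hr j
    simp only [asmMat] at this
    simp only [border, Fin.cons_zero, Fin.cons_succ]
    apply Fin.ext
    show 1 = _
    omega
  · have := hc i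
    simp only [asmMat] at this
    simp only [border, Fin.cons_zero, Fin.cons_succ]
    apply Fin.ext
    show 1 = _
    omega
  · simp [border]

theorem pf_corner {n : ℕ} (a b c : Fin (n + 1) → Fin (n + 1) → R) (h0 : b 0 0 = 0) :
    pf a b c = (∏ j : Fin n, a 0 j.succ) * (∏ i : Fin n, a i.succ 0) *
      pf (fun i j : Fin n => a i.succ j.succ) (fun i j => b i.succ j.succ)
        (fun i j => c i.succ j.succ) := by
  classical
  unfold pf
  rw [mul_sum]
  symm
  refine sum_of_injOn border border_injective.injOn (fun _ _ => by simp) ?_ ?_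
  · intro e _ he
    split_ifs with h
    · rw [prod_eq_zero (mem_univ 0)]
      rw [prod_eq_zero (mem_univ 0)]
      have h1 : asmMat e 0 0 ≠ 1 := by
        intro h1
        obtain ⟨e', rfl⟩ := exists_border h h1
        simp at he
      have h2 := (h.rowAlt 0).zero_nonneg
      have h3 : asmMat e 0 0 = 0 := by
        rcases h.1 0 0 with h4 | h4 | h4 <;> omega
      have h4 := pre_succ (asmMat e 0) 0
      have h5 := pre_succ (fun i => asmMat e i 0) 0
      simp only [Fin.castSucc_zero, pre_zero, h3] at h4 h5
      rw [vw, if_neg (by omega), if_neg (by omega), if_pos (h4.trans h5.symm), h0]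
    · rfl
  · intro e _
    rw [mul_ite, mul_zero]
    refine if_congr (isASM_border e).symm ?_ rfl
    have hrow0 := asmMat_border_zero e
    have hrow := asmMat_border_succ e
    have hcol0 := asmMat_border_col_zero e
    have hcol := asmMat_border_col_succ e
    rw [Fin.prod_univ_succ, Fin.prod_univ_succ]
    have e1 : vw a b c (asmMat (border e)) 0 0 = 1 := by
      simp [vw, hrow0]
    have e2 : ∀ j : Fin n, vw a b c (asmMat (border e)) 0 j.succ = a 0 j.succ := by
      intro j
      simp only [vw, hrow0, hcol, Fin.cons_succ, pre_cons, pre_const_zero, pre_zero]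
      simp
    have e3 : ∀ i : Fin n, vw a b c (asmMat (border e)) i.succ 0 = a i.succ 0 := by
      intro j
      simp only [vw, hrow, hcol0, Fin.cons_zero, pre_cons, pre_const_zero, pre_zero]
      simp
    have e4 : ∀ i j : Fin n, vw a b c (asmMat (border e)) i.succ j.succ =
        vw (fun i j : Fin n => a i.succ j.succ) (fun i j => b i.succ j.succ)
        (fun i j => c i.succ j.succ) (asmMat e) i j := by
      intro i j
      simp only [vw, hrow, hcol, Fin.cons_succ, pre_cons, zero_add]
    simp only [e1, e2, Fin.prod_univ_succ, e3, e4, prod_mul_distrib]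
    ring

end weights

section transfer

open scoped Kronecker

variable {R : Type*} [CommRing R]

/-- The weight of a six-vertex configuration with left, right, top and bottom edges
`l`, `r`, `t`, `d`. -/
def iceW (a b c : R) (l r t d : Bool) : R :=
  if l = r ∧ t = d then (if r = d then b else a)
  else if l = t ∧ r = d then (if l then c else 1) else 0

/-- The row transfer matrix. -/
def rowT {m : ℕ} (a b c : Fin m → R) : Matrix (Fin m → Bool) (Fin m → Bool) R :=
  Matrix.of fun s s' =>
    (List.ofFn fun j : Fin m =>
      (Matrix.of fun l r => iceW (a j) (b j) (c j) l r (s j) (s' j) : Matrix Bool Bool R)).prod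
        false true

theorem list_prod_apply_eq_sum {S : Type*} [Fintype S] [DecidableEq S] {n : ℕ}
    (M : Fin n → Matrix S S R) (s t : S) :
    (List.ofFn M).prod s t = ∑ v : Fin (n + 1) → S,
      if v 0 = s ∧ v (Fin.last n) = t then ∏ i, M i (v i.castSucc) (v i.succ) else 0 := by
  induction n generalizing s with
  | zero =>
    rw [← Equiv.sum_comp (Equiv.funUnique (Fin 1) S).symm]
    simp only [List.ofFn_zero, List.prod_nil, Matrix.one_apply, univ_eq_empty, prod_empty]
    simp only [Equiv.funUnique_symm_apply, uniqueElim_const]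
    by_cases h : s = t
    · subst h; simp
    · rw [if_neg h, sum_eq_zero]
      intro x _
      rw [if_neg]
      rintro ⟨rfl, h1⟩
      exact h h1
  | succ n ih =>
    rw [List.ofFn_succ, List.prod_cons, Matrix.mul_apply]
    simp only [ih]
    rw [← Equiv.sum_comp (Fin.consEquiv (fun _ => S)), Fintype.sum_prod_type]
    symm
    refine (Fintype.sum_eq_single s ?_).trans ?_
    · intro x hx
      refine sum_eq_zero fun v _ => ?_
      rw [if_neg]
      rintro ⟨h, -⟩
      exact hx (by simpa using h)
    · simp only [mul_sum]
      rw [sum_comm]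
      refine sum_congr rfl fun v _ => ?_
      symm
      refine (Fintype.sum_eq_single (v 0) ?_).trans ?_
      · intro x hx
        rw [if_neg (fun h => hx h.1.symm), mul_zero]
      · simp only [Fin.consEquiv_apply, Fin.cons_zero, true_and, Fin.prod_univ_succ,
          Fin.castSucc_zero, Fin.cons_succ, ← Fin.succ_last, mul_ite, mul_zero,
          ← Fin.succ_castSucc]

/-- The integer value of an edge state. -/
def bz (x : Bool) : ℤ := if x then 1 else 0

/-- The edge states along a line of an ASM. -/
def edgeOf {n : ℕ} (f : Fin n → ℤ) (k : Fin (n + 1)) : Bool := decide (pre f k = 1)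

theorem IsAlt.bz_edgeOf {n : ℕ} {f : Fin n → ℤ} (h : IsAlt f) (k : Fin (n + 1)) :
    bz (edgeOf f k) = pre f k := by
  rcases h.1 k with h1 | h1 <;> simp [bz, edgeOf, h1]

theorem IsAlt.eq_bz_sub {n : ℕ} {f : Fin n → ℤ} (h : IsAlt f) (k : Fin n) :
    f k = bz (edgeOf f k.succ) - bz (edgeOf f k.castSucc) := by
  rw [h.bz_edgeOf, h.bz_edgeOf, pre_succ]
  ring

theorem IsAlt.edgeOf_zero {n : ℕ} (f : Fin n → ℤ) : edgeOf f 0 = false := by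
  simp [edgeOf, pre_zero]

theorem IsAlt.edgeOf_last {n : ℕ} {f : Fin n → ℤ} (h : IsAlt f) :
    edgeOf f (Fin.last n) = true := by
  simp [edgeOf, pre_last, h.2]

theorem pre_eq_bz {n : ℕ} {f : Fin n → ℤ} {w : Fin (n + 1) → Bool} (h0 : w 0 = false)
    (h : ∀ k : Fin n, f k = bz (w k.succ) - bz (w k.castSucc)) (k : Fin (n + 1)) :
    pre f k = bz (w k) := by
  induction k using Fin.induction with
  | zero => simp [pre_zero, h0, bz]
  | succ k ih => rw [pre_succ, ih, h]; ring

theorem isAlt_of_bz {n : ℕ} {f : Fin n → ℤ} {w : Fin (n + 1) → Bool} (h0 : w 0 = false)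
    (h1 : w (Fin.last n) = true)
    (h : ∀ k : Fin n, f k = bz (w k.succ) - bz (w k.castSucc)) : IsAlt f := by
  refine ⟨fun k => ?_, ?_⟩
  · rw [pre_eq_bz h0 h]
    cases w k <;> simp [bz]
  · rw [← pre_last, pre_eq_bz h0 h, h1]
    rfl

theorem edgeOf_eq_of_bz {n : ℕ} {f : Fin n → ℤ} {w : Fin (n + 1) → Bool} (h0 : w 0 = false)
    (h : ∀ k : Fin n, f k = bz (w k.succ) - bz (w k.castSucc)) : edgeOf f = w := by
  funext k
  rw [edgeOf, pre_eq_bz h0 h]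
  cases w k <;> simp [bz]

theorem pf_eq_sum_edges {n : ℕ} (a b c : Fin n → Fin n → R) :
    pf a b c = ∑ p : (Fin (n + 1) → Fin n → Bool) × (Fin n → Fin (n + 1) → Bool),
      if (p.1 0 = (fun _ => false) ∧ p.1 (Fin.last n) = fun _ => true) ∧
          ((∀ i, p.2 i 0 = false) ∧ ∀ i, p.2 i (Fin.last n) = true) then
        ∏ i, ∏ j, iceW (a i j) (b i j) (c i j) (p.2 i j.castSucc) (p.2 i j.succ)
          (p.1 i.castSucc j) (p.1 i.succ j)
      else 0 := by
  classical
  unfold pf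
  simp only [← sum_filter]
  refine sum_of_injOn (fun e => (fun k j => edgeOf (fun i => asmMat e i j) k,
    fun i k => edgeOf (asmMat e i) k)) ?_ ?_ ?_ ?_
  · intro e he e' he' h
    simp only [coe_filter, mem_univ, true_and, Set.mem_ofPred_eq] at he he'
    have h2 := (Prod.ext_iff.1 h).2
    funext i j
    have h3 := (he.rowAlt i).eq_bz_sub j
    have h4 := (he'.rowAlt i).eq_bz_sub j
    have h5 := congrFun (congrFun h2 i) j.succ
    have h6 := congrFun (congrFun h2 i) j.castSucc
    simp only at h5 h6
    rw [h5, h6, ← h4] at h3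
    simp only [asmMat] at h3
    apply Fin.ext
    omega
  · intro e he
    simp only [coe_filter, mem_univ, true_and, Set.mem_ofPred_eq] at he ⊢
    refine ⟨⟨?_, ?_⟩, ?_, ?_⟩
    · funext j; exact IsAlt.edgeOf_zero _
    · funext j; exact (he.colAlt j).edgeOf_last
    · intro i; exact IsAlt.edgeOf_zero _
    · intro i; exact (he.rowAlt i).edgeOf_last
  · rintro ⟨v, h⟩ hp hne
    simp only [mem_filter, mem_univ, true_and] at hp
    obtain ⟨⟨hv0, hv1⟩, hh0, hh1⟩ := hp
    by_contra hprod
    apply hne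
    have hice : ∀ i j, bz (h i j.succ) - bz (h i j.castSucc) =
        bz (v i.succ j) - bz (v i.castSucc j) := by
      intro i j
      have h1 : iceW (a i j) (b i j) (c i j) (h i j.castSucc) (h i j.succ)
          (v i.castSucc j) (v i.succ j) ≠ 0 := fun h1 =>
        hprod (prod_eq_zero (mem_univ i) (prod_eq_zero (mem_univ j) h1))
      revert h1
      generalize h i j.succ = x1
      generalize h i j.castSucc = x2
      generalize v i.succ j = x3
      generalize v i.castSucc j = x4
      cases x1 <;> cases x2 <;> cases x3 <;> cases x4 <;> simp [iceW, bz]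
    let e : Fin n → Fin n → Fin 3 := fun i j =>
      ⟨(bz (h i j.succ) - bz (h i j.castSucc) + 1).toNat, by
        generalize h i j.succ = x1
        generalize h i j.castSucc = x2
        cases x1 <;> cases x2 <;> simp [bz]⟩
    have hr : ∀ i j, asmMat e i j = bz (h i j.succ) - bz (h i j.castSucc) := by
      intro i j
      simp only [asmMat, e]
      generalize h i j.succ = x1
      generalize h i j.castSucc = x2
      cases x1 <;> cases x2 <;> simp [bz]
    have hc : ∀ i j, asmMat e i j = bz (v i.succ j) - bz (v i.castSucc j) := by
      intro i j; rw [hr, hice]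
    refine ⟨e, ?_, ?_⟩
    · simp only [coe_filter, mem_univ, true_and, Set.mem_ofPred_eq]
      refine (isASM_iff e).2 ⟨fun i => isAlt_of_bz (hh0 i) (hh1 i) (hr i), fun j => ?_⟩
      exact isAlt_of_bz (w := fun k => v k j) (congrFun hv0 j) (congrFun hv1 j)
        (fun i => hc i j)
    · refine Prod.ext ?_ ?_
      · funext k j
        exact congrFun (edgeOf_eq_of_bz (w := fun k => v k j) (congrFun hv0 j)
          (fun i => hc i j)) k
      · funext i k
        exact congrFun (edgeOf_eq_of_bz (hh0 i) (hr i)) k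
  · intro e he
    simp only [mem_filter, mem_univ, true_and] at he
    refine prod_congr rfl fun i _ => prod_congr rfl fun j _ => ?_
    have r1 := (he.rowAlt i).bz_edgeOf j.succ
    have r2 := (he.rowAlt i).eq_bz_sub j
    have c1 := (he.colAlt j).bz_edgeOf i.succ
    have c2 := (he.colAlt j).eq_bz_sub i
    rw [vw, ← r1, ← c1]
    have r3 := r2.symm.trans c2
    rw [r2]
    change _ = iceW _ _ _ (edgeOf (asmMat e i) j.castSucc) (edgeOf (asmMat e i) j.succ)
      (edgeOf (fun i => asmMat e i j) i.castSucc) (edgeOf (fun i => asmMat e i j) i.succ)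
    revert r3
    generalize edgeOf (asmMat e i) j.succ = x1
    generalize edgeOf (asmMat e i) j.castSucc = x2
    generalize edgeOf (fun i => asmMat e i j) i.succ = x3
    generalize edgeOf (fun i => asmMat e i j) i.castSucc = x4
    cases x1 <;> cases x2 <;> cases x3 <;> cases x4 <;> simp [iceW, bz]

theorem pf_eq_transfer {n : ℕ} (a b c : Fin n → Fin n → R) :
    pf a b c = (List.ofFn fun i => rowT (a i) (b i) (c i)).prod (fun _ => false)
      (fun _ => true) := by
  rw [pf_eq_sum_edges, list_prod_apply_eq_sum, Fintype.sum_prod_type]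
  refine sum_congr rfl fun v _ => ?_
  simp only [ite_and]
  split_ifs with h1 h2
  · simp only [rowT, Matrix.of_apply, list_prod_apply_eq_sum]
    rw [prod_univ_sum, Fintype.piFinset_univ]
    refine sum_congr rfl fun h _ => ?_
    split_ifs with h3 h4
    · refine prod_congr rfl fun i _ => ?_
      rw [if_pos ⟨h3 i, h4 i⟩]
    · obtain ⟨i, hi⟩ := not_forall.1 h4
      rw [prod_eq_zero (mem_univ i)]
      rw [if_neg (fun h => hi h.2)]
    · obtain ⟨i, hi⟩ := not_forall.1 h3
      rw [prod_eq_zero (mem_univ i)]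
      rw [if_neg (fun h => hi h.1)]
  · exact sum_const_zero
  · exact sum_const_zero

theorem sum_list_prod_kronecker {S : Type*} [Fintype S] [DecidableEq S] {T : Type*} [Fintype T]
    {n : ℕ} (U V : Fin n → T → Matrix S S R) :
    ∑ s : Fin n → T, (List.ofFn fun j => U j (s j)).prod ⊗ₖ (List.ofFn fun j => V j (s j)).prod =
      (List.ofFn fun j => ∑ σ : T, U j σ ⊗ₖ V j σ).prod := by
  induction n with
  | zero => simp
  | succ n ih =>
    rw [← Equiv.sum_comp (Fin.consEquiv (fun _ => T)), Fintype.sum_prod_type]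
    simp only [List.ofFn_succ, List.prod_cons, Fin.consEquiv_apply, Fin.cons_zero, Fin.cons_succ,
      Matrix.mul_kronecker_mul]
    rw [← ih, sum_mul]
    refine sum_congr rfl fun x _ => ?_
    rw [mul_sum]

theorem list_prod_intertwine {S : Type*} [Fintype S] [DecidableEq S] {n : ℕ}
    (P : Matrix S S R) (U V : Fin n → Matrix S S R) (h : ∀ j, P * U j = V j * P) :
    P * (List.ofFn U).prod = (List.ofFn V).prod * P := by
  induction n with
  | zero => simp
  | succ n ih =>
    rw [List.ofFn_succ, List.prod_cons, List.ofFn_succ, List.prod_cons, ← mul_assoc, h, mul_assoc,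
      ih _ _ (fun j => h j.succ), mul_assoc]

end transfer

section sixvertex

open scoped Kronecker

/-- The `a`-weight of the six-vertex model at a cube root of unity. -/
def wa {R : Type*} [CommRing R] (ω x y : R) : R := y - ω ^ 2 * x

/-- The `b`-weight of the six-vertex model at a cube root of unity. -/
def wb {R : Type*} [CommRing R] (ω x y : R) : R := x - ω ^ 2 * y

/-- The weight of the entry `-1` in the six-vertex model at a cube root of unity. -/
def wc {R : Type*} [CommRing R] (ω x y : R) : R := -(3 * ω ^ 2 * (x * y))

/-- The inhomogeneous partition function of the six-vertex model with domain wall boundary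
conditions at a cube root of unity. -/
noncomputable def SV {R : Type*} [CommRing R] (ω : R) {n : ℕ} (x y : Fin n → R) : R :=
  pf (fun i j => wa ω (x i) (y j)) (fun i j => wb ω (x i) (y j)) (fun i j => wc ω (x i) (y j))

variable {R : Type*} [CommRing R]

/-- The vertex matrix acting on horizontal edges. -/
def vertM (ω x y : R) (t d : Bool) : Matrix Bool Bool R :=
  Matrix.of fun l r => iceW (wa ω x y) (wb ω x y) (wc ω x y) l r t d

/-- The `R`-matrix of the Yang–Baxter equation. -/
def rMat (ω x x' : R) : Matrix (Bool × Bool) (Bool × Bool) R :=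
  Matrix.of fun p q =>
    if p.1 = p.2 then (if p = q then x - ω ^ 2 * x' else 0)
    else if p = q then (if p.1 then x' * (2 + ω) else x * (2 + ω))
    else if q = (p.2, p.1) then ω * (x' - x) else 0

set_option maxHeartbeats 4000000 in
theorem rMat_mul_vertM {ω : R} (hω : ω ^ 2 + ω + 1 = 0) (x x' y : R) (t d : Bool) :
    rMat ω x x' * (∑ σ, vertM ω x y t σ ⊗ₖ vertM ω x' y σ d) =
      (∑ σ, vertM ω x' y t σ ⊗ₖ vertM ω x y σ d) * rMat ω x x' := by
  ext ⟨i, k⟩ ⟨j, l⟩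
  cases t <;> cases d <;> cases i <;> cases k <;> cases j <;> cases l <;>
    simp [Matrix.mul_apply, Fintype.sum_prod_type, iceW, rMat, vertM, wa, wb, wc] <;> grind

/-- The row transfer matrix of the six-vertex model. -/
def rowSV (ω : R) {m : ℕ} (y : Fin m → R) (x : R) : Matrix (Fin m → Bool) (Fin m → Bool) R :=
  rowT (fun j => wa ω x (y j)) (fun j => wb ω x (y j)) (fun j => wc ω x (y j))

theorem rowSV_mul_apply (ω : R) {m : ℕ} (y : Fin m → R) (x x' : R) (s s' : Fin m → Bool) :
    (rowSV ω y x * rowSV ω y x') s s' =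
      (List.ofFn fun j => ∑ σ, vertM ω x (y j) (s j) σ ⊗ₖ vertM ω x' (y j) σ (s' j)).prod
        (false, false) (true, true) := by
  rw [← sum_list_prod_kronecker (fun j σ => vertM ω x (y j) (s j) σ)
    (fun j σ => vertM ω x' (y j) σ (s' j)), Matrix.sum_apply, Matrix.mul_apply]
  rfl

theorem corner_mul_rowSV {ω : R} (hω : ω ^ 2 + ω + 1 = 0) {m : ℕ} (y : Fin m → R) (x x' : R)
    (s s' : Fin m → Bool) :
    (x - ω ^ 2 * x') * (rowSV ω y x * rowSV ω y x') s s' =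
      (x - ω ^ 2 * x') * (rowSV ω y x' * rowSV ω y x) s s' := by
  have h := congrFun (congrFun (list_prod_intertwine (rMat ω x x')
    (fun j => ∑ σ, vertM ω x (y j) (s j) σ ⊗ₖ vertM ω x' (y j) σ (s' j))
    (fun j => ∑ σ, vertM ω x' (y j) (s j) σ ⊗ₖ vertM ω x (y j) σ (s' j))
    (fun j => rMat_mul_vertM hω x x' (y j) (s j) (s' j))) (false, false)) (true, true)
  rw [Matrix.mul_apply, Matrix.mul_apply] at h
  rw [Fintype.sum_eq_single (false, false)
    (by rintro ⟨i, k⟩ hp; cases i <;> cases k <;> simp_all [rMat]),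
    Fintype.sum_eq_single (true, true)
    (by rintro ⟨i, k⟩ hp; cases i <;> cases k <;> simp_all [rMat])] at h
  rw [rowSV_mul_apply, rowSV_mul_apply]
  simp only [rMat, Matrix.of_apply, if_true] at h
  rw [h, mul_comm]

theorem map_iceW {S : Type*} [CommRing S] (f : R →+* S) (a b c : R) (l r t d : Bool) :
    f (iceW a b c l r t d) = iceW (f a) (f b) (f c) l r t d := by
  simp only [iceW]
  split_ifs <;> simp

theorem map_pf {S : Type*} [CommRing S] (f : R →+* S) {n : ℕ} (a b c : Fin n → Fin n → R) :
    f (pf a b c) = pf (fun i j => f (a i j)) (fun i j => f (b i j)) (fun i j => f (c i j)) := by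
  simp only [pf, map_sum]
  refine sum_congr rfl fun e _ => ?_
  rw [apply_ite f, map_zero]
  congr 1
  simp only [map_prod]
  refine prod_congr rfl fun i _ => prod_congr rfl fun j _ => ?_
  simp only [vw]
  split_ifs <;> simp

theorem map_SV {S : Type*} [CommRing S] (f : R →+* S) (ω : R) {n : ℕ} (x y : Fin n → R) :
    f (SV ω x y) = SV (f ω) (fun i => f (x i)) (fun i => f (y i)) := by
  rw [SV, map_pf, SV]
  simp [wa, wb, wc, map_ofNat]

theorem map_rowSV {S : Type*} [CommRing S] (f : R →+* S) (ω : R) {m : ℕ} (y : Fin m → R) (x : R) :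
    (rowSV ω y x).map f = rowSV (f ω) (fun j => f (y j)) (f x) := by
  ext s s'
  simp only [rowSV, rowT, Matrix.map_apply, Matrix.of_apply, list_prod_apply_eq_sum, map_sum]
  refine sum_congr rfl fun v _ => ?_
  rw [apply_ite f, map_zero, map_prod]
  simp [map_iceW, wa, wb, wc, map_ofNat]

theorem commute_rowSV {ω : R} (hω : ω ^ 2 + ω + 1 = 0) {m : ℕ} (y : Fin m → R) (x x' : R) :
    Commute (rowSV ω y x) (rowSV ω y x') := by
  open Polynomial in
  have key : rowSV (C ω) (fun j => C (y j)) X * rowSV (C ω) (fun j => C (y j)) (C x') =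
      rowSV (C ω) (fun j => C (y j)) (C x') * rowSV (C ω) (fun j => C (y j)) (X : R[X]) := by
    ext1 s s'
    have h := corner_mul_rowSV (ω := C ω) (by rw [← C_pow, ← C_add, ← C_1, ← C_add, hω, C_0])
      (fun j => C (y j)) X (C x') s s'
    have hm : (X - C ω ^ 2 * C x').Monic := by
      rw [← C_pow, ← C_mul]; exact monic_X_sub_C _
    exact hm.isRegular.left h
  have h2 := congrArg (fun M => M.map (Polynomial.evalRingHom x)) key
  simp only [Matrix.map_mul, map_rowSV] at h2
  simpa [Commute, SemiconjBy] using h2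

theorem SV_comp_perm_left {ω : R} (hω : ω ^ 2 + ω + 1 = 0) {n : ℕ} (σ : Equiv.Perm (Fin n))
    (x y : Fin n → R) : SV ω (x ∘ σ) y = SV ω x y := by
  simp only [SV, pf_eq_transfer]
  refine congrFun (congrFun ?_ _) _
  refine List.Perm.prod_eq' (Equiv.Perm.ofFn_comp_perm σ (fun i => rowSV ω y (x i))) ?_
  rw [List.pairwise_ofFn]
  intro i j _
  exact commute_rowSV hω y _ _

theorem SV_swap_rev (ω : R) {n : ℕ} (x y : Fin n → R) :
    SV ω x y = SV ω (y ∘ Fin.rev) x := by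
  rw [SV, ← pf_transpose, ← pf_flip, SV]
  simp only [wa, wb, wc, Function.comp, mul_comm]

theorem SV_comm {ω : R} (hω : ω ^ 2 + ω + 1 = 0) {n : ℕ} (x y : Fin n → R) :
    SV ω x y = SV ω y x := by
  rw [SV_swap_rev]
  exact SV_comp_perm_left hω Fin.revPerm y x

theorem SV_comp_perm_right {ω : R} (hω : ω ^ 2 + ω + 1 = 0) {n : ℕ} (σ : Equiv.Perm (Fin n))
    (x y : Fin n → R) : SV ω x (y ∘ σ) = SV ω x y := by
  rw [SV_comm hω, SV_comp_perm_left hω, SV_comm hω]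

end sixvertex

theorem exists_perm_of_map_eq {ι α : Type*} [Fintype ι] {f g : ι → α}
    (h : (univ : Finset ι).val.map f = (univ : Finset ι).val.map g) :
    ∃ σ : Equiv.Perm ι, f = g ∘ σ := by
  classical
  have hc : ∀ c, Nonempty ({i // f i = c} ≃ {i // g i = c}) := by
    intro c
    rw [← Fintype.card_eq, Fintype.card_subtype, Fintype.card_subtype]
    have h1 := congrArg (Multiset.count c) h
    rw [Multiset.count_map, Multiset.count_map] at h1
    simp only [eq_comm (a := c)] at h1
    exact h1
  choose e he using fun c => (⟨(hc c).some, trivial⟩ : ∃ _ : {i // f i = c} ≃ {i // g i = c}, True)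
  exact ⟨Equiv.ofFiberEquiv e, funext fun i => (Equiv.ofFiberEquiv_map e i).symm⟩

/-- The multiset of entries of a tuple. -/
def mset {α : Type*} {n : ℕ} (x : Fin n → α) : Multiset α := (univ : Finset (Fin n)).val.map x

theorem mset_comp_perm {α : Type*} {n : ℕ} (x : Fin n → α) (σ : Equiv.Perm (Fin n)) :
    mset (x ∘ σ) = mset x := by
  rw [mset, ← Multiset.map_map, Multiset.map_univ_val_equiv, mset]

theorem mset_cons {α : Type*} {n : ℕ} (a : α) (x : Fin n → α) :
    mset (Fin.cons a x : Fin (n + 1) → α) = a ::ₘ mset x := by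
  simp [mset, List.ofFn_succ]

theorem mset_removeNth {α : Type*} {n : ℕ} (x : Fin (n + 1) → α) (p : Fin (n + 1)) :
    mset x = x p ::ₘ mset (p.removeNth x) := by
  rw [← mset_cons, Fin.cons_removeNth_eq_comp_cycleRange_symm, mset_comp_perm]

section symmetric

variable {R : Type*} [CommRing R] {ω : R}

theorem SV_congr_left (hω : ω ^ 2 + ω + 1 = 0) {n : ℕ} {x x' : Fin n → R} (y : Fin n → R)
    (h : mset x = mset x') : SV ω x y = SV ω x' y := by
  obtain ⟨σ, rfl⟩ := exists_perm_of_map_eq h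
  exact SV_comp_perm_left hω σ x' y

theorem SV_congr_right (hω : ω ^ 2 + ω + 1 = 0) {n : ℕ} {y y' : Fin n → R} (x : Fin n → R)
    (h : mset y = mset y') : SV ω x y = SV ω x y' := by
  rw [SV_comm hω, SV_congr_left hω x h, SV_comm hω]

theorem SV_one (x y : Fin 1 → R) : SV ω x y = 1 := by
  have h := pf_eq_transfer (fun i j => wa ω (x i) (y j)) (fun i j => wb ω (x i) (y j))
    (fun i j => wc ω (x i) (y j))
  rw [SV, h]
  simp [rowT, iceW]

/-- The factor in the recursion for the partition function. -/
def recFactor (ω u b : R) {n : ℕ} (x y : Fin n → R) : R :=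
  (-ω ^ 2) ^ n * ((∏ i, (x i - u ^ 2 * b)) * ∏ i, (y i - u ^ 2 * b))

theorem recFactor_cons (u b p q : R) {n : ℕ} (x y : Fin n → R) :
    recFactor ω u b (Fin.cons p x : Fin (n + 1) → R) (Fin.cons q y : Fin (n + 1) → R) =
      -ω ^ 2 * ((p - u ^ 2 * b) * (q - u ^ 2 * b)) * recFactor ω u b x y := by
  simp only [recFactor, Fin.prod_univ_succ, Fin.cons_zero, Fin.cons_succ, pow_succ]
  ring

theorem SV_cons_sq_mul (hω : ω ^ 2 + ω + 1 = 0) {n : ℕ} (b : R) (x y : Fin n → R) :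
    SV ω (Fin.cons (ω ^ 2 * b) x : Fin (n + 1) → R) (Fin.cons b y : Fin (n + 1) → R) =
      recFactor ω (ω ^ 2) b x y * SV ω x y := by
  have h3 : ω ^ 3 = 1 := by linear_combination (ω - 1) * hω
  rw [SV, pf_corner]
  · simp only [Fin.cons_zero, Fin.cons_succ, recFactor]
    refine congrArg₂ (· * ·) ?_ rfl
    rw [mul_comm, ← mul_assoc]
    congr 1
    · have hc : (-ω ^ 2) ^ n = ∏ _i : Fin n, (-ω ^ 2) := by simp
      rw [hc, ← prod_mul_distrib]
      refine prod_congr rfl fun i _ => ?_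
      rw [wa]
      linear_combination (-ω ^ 3 - 1) * b * h3
    · refine prod_congr rfl fun i _ => ?_
      rw [wa]
      ring
  · simp [wb]

theorem SV_cons_mul (hω : ω ^ 2 + ω + 1 = 0) {u : R} (hu : u = ω ∨ u = ω ^ 2) {n : ℕ} (b : R)
    (x y : Fin n → R) :
    SV ω (Fin.cons (u * b) x : Fin (n + 1) → R) (Fin.cons b y : Fin (n + 1) → R) =
      recFactor ω u b x y * SV ω x y := by
  have h3 : ω ^ 3 = 1 := by linear_combination (ω - 1) * hω
  rcases hu with rfl | rfl
  · have h := SV_cons_sq_mul hω (u * b) y x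
    have e : u ^ 2 * (u * b) = b := by linear_combination b * h3
    rw [e] at h
    rw [SV_comm hω, h, SV_comm hω x y]
    congr 1
    have e2 : (u ^ 2) ^ 2 * (u * b) = u ^ 2 * b := by linear_combination u ^ 2 * b * h3
    rw [recFactor, recFactor, e2]
    ring
  · exact SV_cons_sq_mul hω b x y

open Polynomial in
/-- The partition function as a polynomial in its first argument. -/
noncomputable def SVpoly (ω : R) {n : ℕ} (x : Fin n → R) (y : Fin (n + 1) → R) : R[X] :=
  SV (C ω) (Fin.cons X (fun i => C (x i)) : Fin (n + 1) → R[X]) (fun j => C (y j))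

theorem eval_SVpoly {n : ℕ} (x : Fin n → R) (y : Fin (n + 1) → R) (t : R) :
    (SVpoly ω x y).eval t = SV ω (Fin.cons t x : Fin (n + 1) → R) y := by
  have h := map_SV (Polynomial.evalRingHom t) (Polynomial.C ω)
    (Fin.cons Polynomial.X (fun i => Polynomial.C (x i)) : Fin (n + 1) → Polynomial R)
    (fun j => Polynomial.C (y j))
  rw [Polynomial.coe_evalRingHom] at h
  rw [SVpoly, h]
  simp only [Polynomial.eval_C]
  congr 1
  funext i
  cases i using Fin.cases <;> simp

theorem natDegree_SVpoly_le {n : ℕ} (x : Fin n → R) (y : Fin (n + 1) → R) :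
    (SVpoly ω x y).natDegree ≤ n := by
  classical
  open Polynomial in
  unfold SVpoly SV pf
  refine Polynomial.natDegree_sum_le_of_forall_le _ _ fun e _ => ?_
  split_ifs with he
  swap
  · simp
  have hA : ∀ j, (Polynomial.natDegree (vw (fun i j => wa (C ω)
        ((Fin.cons X (fun i => C (x i)) : Fin (n + 1) → R[X]) i) (C (y j)))
      (fun i j => wb (C ω) ((Fin.cons X (fun i => C (x i)) : Fin (n + 1) → R[X]) i) (C (y j)))
      (fun i j => wc (C ω) ((Fin.cons X (fun i => C (x i)) : Fin (n + 1) → R[X]) i) (C (y j)))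
      (asmMat e) 0 j) : ℤ) ≤ 1 - asmMat e 0 j := by
    intro j
    have h1 := (he.rowAlt 0).mem j
    have da : (wa (C ω) X (C (y j)) : R[X]).natDegree ≤ 1 := by
      unfold wa; rw [← C_pow]; compute_degree
    have db : (wb (C ω) X (C (y j)) : R[X]).natDegree ≤ 1 := by
      unfold wb; rw [← C_pow]; compute_degree
    have dc : (wc (C ω) X (C (y j)) : R[X]).natDegree ≤ 2 := by
      unfold wc; rw [← C_pow]; compute_degree; norm_num
    unfold vw
    simp only [Fin.cons_zero]
    split_ifs with h2 h3 h4
    · simp [h2]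
    · rw [h3]; omega
    · omega
    · omega
  rw [Fin.prod_univ_succ]
  refine (Polynomial.natDegree_mul_le_of_le (m := n) (n := 0) ?_ ?_).trans (by simp)
  · refine (Polynomial.natDegree_prod_le _ _).trans ?_
    zify
    refine (sum_le_sum fun j _ => hA j).trans ?_
    rw [sum_sub_distrib, (he.rowAlt 0).2]
    simp
  · refine (Polynomial.natDegree_prod_le _ _).trans ?_
    simp only [nonpos_iff_eq_zero, sum_eq_zero_iff, mem_univ, true_imp_iff]
    intro i
    rw [← nonpos_iff_eq_zero]
    refine (Polynomial.natDegree_prod_le _ _).trans ?_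
    simp only [nonpos_iff_eq_zero, sum_eq_zero_iff, mem_univ, true_imp_iff]
    intro j
    rw [← nonpos_iff_eq_zero]
    unfold vw
    simp only [Fin.cons_succ]
    split_ifs
    · simp
    · unfold wc; rw [← C_pow]; compute_degree
    · unfold wb; rw [← C_pow]; compute_degree
    · unfold wa; rw [← C_pow]; compute_degree

end symmetric

/-- The points `ω yᵢ` and `ω² yᵢ`. -/
def omegaPt {R : Type*} [CommRing R] (ω : R) {k : ℕ} (y : Fin k → R) (p : Fin k × Bool) : R :=
  (if p.2 then ω else ω ^ 2) * y p.1

theorem omega_ite_or {R : Type*} [CommRing R] (ω : R) (c : Bool) :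
    (if c then ω else ω ^ 2) = ω ∨ (if c then ω else ω ^ 2) = ω ^ 2 := by
  cases c <;> simp

section generic

open MvPolynomial

variable {R : Type*} [CommRing R] {ω : R}

theorem omega_ne_zero [Nontrivial R] (hω : ω ^ 2 + ω + 1 = 0) : ω ≠ 0 := by
  rintro rfl
  simp at hω

theorem omega_ne_sq [IsDomain R] (hω : ω ^ 2 + ω + 1 = 0) (h1 : ω ≠ 1) : ω ≠ ω ^ 2 := by
  intro h
  apply h1
  apply mul_left_cancel₀ (omega_ne_zero hω)
  rw [mul_one, ← sq, ← h]

theorem C_omega (hω : ω ^ 2 + ω + 1 = 0) {σ : Type*} :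
    (C ω : MvPolynomial σ R) ^ 2 + C ω + 1 = 0 := by
  rw [← C_pow, ← C_add, ← C_1, ← C_add, hω, C_0]

theorem C_omega_ne_one (h1 : ω ≠ 1) {σ : Type*} : (C ω : MvPolynomial σ R) ≠ 1 := by
  rw [← C_1]
  exact fun h => h1 (C_injective _ _ h)

theorem eq_of_C_mul_X_eq {σ : Type*} {u v : R} (hu : u ≠ 0) {i j : σ}
    (h : (C u * X i : MvPolynomial σ R) = C v * X j) : i = j ∧ u = v := by
  classical
  have h2 := congrArg (eval (fun s => if s = i then (1 : R) else 0)) h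
  simp only [map_mul, eval_C, eval_X, if_true, mul_one] at h2
  by_cases hij : j = i
  · subst hij; exact ⟨rfl, by simpa using h2⟩
  · rw [if_neg hij, mul_zero] at h2
    exact absurd h2 hu

theorem omegaPt_injective [IsDomain R] (hω : ω ^ 2 + ω + 1 = 0) (h1 : ω ≠ 1) {k m : ℕ} {g : Fin k → Fin m}
    (hg : Function.Injective g) :
    Function.Injective
      (omegaPt (C ω) (fun i => (X (g i) : MvPolynomial (Fin m) R))) := by
  rintro ⟨i, c⟩ ⟨j, d⟩ h
  have h0 := omega_ne_zero hω
  have h2 := omega_ne_sq hω h1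
  simp only [omegaPt, ← C_pow, ← apply_ite C] at h
  obtain ⟨h3, h4⟩ := eq_of_C_mul_X_eq (by split_ifs <;> simp [h0]) h
  rw [hg h3]
  cases c <;> cases d <;> simp_all

end generic

section fullsymmetry

theorem mset_cons_cons {α : Type*} {n : ℕ} (a b : α) (x : Fin n → α) :
    mset (Fin.cons a (Fin.cons b x : Fin (n + 1) → α) : Fin (n + 2) → α) =
      mset (Fin.cons b (Fin.cons a x : Fin (n + 1) → α) : Fin (n + 2) → α) := by
  simp only [mset_cons]
  exact Multiset.cons_swap _ _ _

universe u

theorem SV_cons_cons_swap (n : ℕ) : ∀ {R : Type u} [CommRing R] [IsDomain R] {ω : R}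
    (_ : ω ^ 2 + ω + 1 = 0) (_ : ω ≠ 1) (a b : R) (x y : Fin n → R),
    SV ω (Fin.cons a x : Fin (n + 1) → R) (Fin.cons b y : Fin (n + 1) → R) =
      SV ω (Fin.cons b x : Fin (n + 1) → R) (Fin.cons a y : Fin (n + 1) → R) := by
  induction n with
  | zero => intros; rw [SV_one, SV_one]
  | succ n ih =>
    intro R _ _ ω hω h1
    have key : ∀ (R : Type u) [CommRing R] [IsDomain R] (ω : R)
        (_ : ω ^ 2 + ω + 1 = 0) (_ : ω ≠ 1) (a b t : R) (x : Fin n → R) (y : Fin (n + 1) → R)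
        (_ : Function.Injective (omegaPt ω y)),
        SV ω (Fin.cons t (Fin.cons a x : Fin (n + 1) → R) : Fin (n + 2) → R)
            (Fin.cons b y : Fin (n + 2) → R) =
          SV ω (Fin.cons t (Fin.cons b x : Fin (n + 1) → R) : Fin (n + 2) → R)
            (Fin.cons a y : Fin (n + 2) → R) := by
      intro R _ _ ω hω h1 a b t x y hy
      have hp : SVpoly ω (Fin.cons a x : Fin (n + 1) → R) (Fin.cons b y : Fin (n + 2) → R) -
          SVpoly ω (Fin.cons b x : Fin (n + 1) → R) (Fin.cons a y : Fin (n + 2) → R) = 0 := by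
        refine Polynomial.eq_zero_of_natDegree_lt_card_of_eval_eq_zero _ hy ?_ ?_
        · rintro ⟨j, c⟩
          rw [Polynomial.eval_sub, sub_eq_zero, eval_SVpoly, eval_SVpoly]
          have hm : ∀ b : R, mset (Fin.cons b y : Fin (n + 2) → R) =
              mset (Fin.cons (y j) (Fin.cons b (j.removeNth y) : Fin (n + 1) → R) :
                Fin (n + 2) → R) := by
            intro b
            rw [mset_cons_cons, mset_cons, mset_removeNth y j, ← mset_cons, ← mset_cons]
          rw [SV_congr_right hω _ (hm b), SV_congr_right hω _ (hm a), omegaPt,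
            SV_cons_mul hω (omega_ite_or ω c), SV_cons_mul hω (omega_ite_or ω c),
            ih hω h1 a b, recFactor_cons, recFactor_cons]
          ring
        · refine lt_of_le_of_lt (Polynomial.natDegree_sub_le_of_le (natDegree_SVpoly_le _ _)
            (natDegree_SVpoly_le _ _)) ?_
          simp
      have h2 := congrArg (Polynomial.eval t) hp
      rwa [Polynomial.eval_sub, Polynomial.eval_zero, sub_eq_zero, eval_SVpoly, eval_SVpoly] at h2
    intro a b x y
    obtain ⟨t, x, rfl⟩ : ∃ (t : R) (x' : Fin n → R), x = Fin.cons t x' :=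
      ⟨x 0, Fin.tail x, (Fin.cons_self_tail x).symm⟩
    have h2 := key (MvPolynomial (Fin (n + 1)) R) (MvPolynomial.C ω) (C_omega hω)
      (C_omega_ne_one h1) (MvPolynomial.C a) (MvPolynomial.C b) (MvPolynomial.C t)
      (fun i => MvPolynomial.C (x i)) MvPolynomial.X
      (omegaPt_injective hω h1 Function.injective_id)
    have h3 := congrArg (MvPolynomial.eval y) h2
    rw [map_SV, map_SV] at h3
    have e : ∀ (m : ℕ) (s : MvPolynomial (Fin (n + 1)) R)
        (v : Fin m → MvPolynomial (Fin (n + 1)) R),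
        (fun i => (MvPolynomial.eval y) ((Fin.cons s v : Fin (m + 1) → _) i)) =
          (Fin.cons (MvPolynomial.eval y s) (fun i => MvPolynomial.eval y (v i)) :
            Fin (m + 1) → R) := by
      intro m s v
      funext i
      cases i using Fin.cases <;> simp
    simp only [e, MvPolynomial.eval_C, MvPolynomial.eval_X] at h3
    rw [SV_congr_left hω _ (mset_cons_cons a t x), h3, SV_congr_left hω _ (mset_cons_cons b t x)]

theorem SV_congr {n : ℕ} {R : Type u} [CommRing R] [IsDomain R] {ω : R}
    (hω : ω ^ 2 + ω + 1 = 0) (h1 : ω ≠ 1) {x y x' y' : Fin n → R}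
    (h : mset x + mset y = mset x' + mset y') : SV ω x y = SV ω x' y' := by
  classical
  have key : ∀ z : Fin n ⊕ Fin n → R, ∀ σ : Equiv.Perm (Fin n ⊕ Fin n),
      SV ω ((z ∘ σ) ∘ Sum.inl) ((z ∘ σ) ∘ Sum.inr) = SV ω (z ∘ Sum.inl) (z ∘ Sum.inr) := by
    have mixed : ∀ (w : Fin n ⊕ Fin n → R) (i j : Fin n),
        SV ω ((w ∘ Equiv.swap (Sum.inl i) (Sum.inr j)) ∘ Sum.inl)
          ((w ∘ Equiv.swap (Sum.inl i) (Sum.inr j)) ∘ Sum.inr) =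
        SV ω (w ∘ Sum.inl) (w ∘ Sum.inr) := by
      intro w i j
      obtain ⟨m, rfl⟩ : ∃ m, n = m + 1 := ⟨n - 1, by have := i.pos; omega⟩
      have e1 : i.removeNth ((w ∘ Equiv.swap (Sum.inl i) (Sum.inr j)) ∘ Sum.inl) =
          i.removeNth (w ∘ Sum.inl) := by
        funext k
        simp [Fin.removeNth, Equiv.swap_apply_of_ne_of_ne, Fin.succAbove_ne]
      have e2 : j.removeNth ((w ∘ Equiv.swap (Sum.inl i) (Sum.inr j)) ∘ Sum.inr) =
          j.removeNth (w ∘ Sum.inr) := by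
        funext k
        simp [Fin.removeNth, Equiv.swap_apply_of_ne_of_ne, Fin.succAbove_ne]
      have e3 : ∀ (x : Fin (m + 1) → R) (p : Fin (m + 1)),
          mset x = mset (Fin.cons (x p) (p.removeNth x) : Fin (m + 1) → R) := by
        intro x p; rw [mset_cons, ← mset_removeNth]
      rw [SV_congr_left hω _ (e3 _ i), SV_congr_right hω _ (e3 _ j), e1, e2,
        SV_cons_cons_swap m hω h1, SV_congr_left hω (w ∘ Sum.inr) (e3 _ i),
        SV_congr_right hω _ (e3 (w ∘ Sum.inr) j)]
      simp
    intro z σ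
    induction σ using Equiv.Perm.swap_induction_on' with
    | one => rfl
    | mul_swap f p q hpq hf =>
      rw [← hf, Equiv.Perm.coe_mul, ← Function.comp_assoc]
      generalize z ∘ f = w
      rcases p with i | i <;> rcases q with j | j
      · have e1 : (w ∘ Equiv.swap (Sum.inl i) (Sum.inl j)) ∘ Sum.inl =
            (w ∘ Sum.inl) ∘ Equiv.swap i j := by
          funext k
          simp [Sum.inl_injective.swap_apply]
        have e2 : (w ∘ Equiv.swap (Sum.inl i) (Sum.inl j)) ∘ Sum.inr = w ∘ Sum.inr := by
          funext k
          simp [Equiv.swap_apply_of_ne_of_ne]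
        rw [e1, e2, SV_comp_perm_left hω]
      · exact mixed w i j
      · rw [Equiv.swap_comm]; exact mixed w j i
      · have e1 : (w ∘ Equiv.swap (Sum.inr i) (Sum.inr j)) ∘ Sum.inr =
            (w ∘ Sum.inr) ∘ Equiv.swap i j := by
          funext k
          simp [Sum.inr_injective.swap_apply]
        have e2 : (w ∘ Equiv.swap (Sum.inr i) (Sum.inr j)) ∘ Sum.inl = w ∘ Sum.inl := by
          funext k
          simp [Equiv.swap_apply_of_ne_of_ne]
        rw [e1, e2, SV_comp_perm_right hω]
  have h2 : (univ : Finset (Fin n ⊕ Fin n)).val.map (Sum.elim x y) =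
      (univ : Finset (Fin n ⊕ Fin n)).val.map (Sum.elim x' y') := by
    rw [← univ_disjSum_univ, val_disjSum, Multiset.map_disjSum, Multiset.map_disjSum]
    exact h
  obtain ⟨σ, hσ⟩ := exists_perm_of_map_eq h2
  have h3 := key (Sum.elim x' y') σ
  rw [← hσ] at h3
  exact h3

end fullsymmetry

section star

universe u

/-- The product of the `a`-weight and the `b`-weight. -/
def wg {R : Type*} [CommRing R] (ω x y : R) : R := wa ω x y * wb ω x y

/-- The quadratic relation between partition functions of sizes `k`, `k + 1` and `k + 2`. -/
def QuadRel {R : Type*} [CommRing R] (ω a b c d : R) {k : ℕ} (x y : Fin k → R) : Prop :=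
  ω ^ 2 * SV ω (Fin.cons a (Fin.cons c x : Fin (k + 1) → R) : Fin (k + 2) → R)
      (Fin.cons b (Fin.cons d y : Fin (k + 1) → R) : Fin (k + 2) → R) * SV ω x y *
      ((a - c) * (b - d)) =
    wg ω a b * wg ω c d * SV ω (Fin.cons a x : Fin (k + 1) → R) (Fin.cons d y : Fin (k + 1) → R) *
        SV ω (Fin.cons b x : Fin (k + 1) → R) (Fin.cons c y : Fin (k + 1) → R) -
      wg ω a d * wg ω b c * SV ω (Fin.cons a x : Fin (k + 1) → R)
        (Fin.cons b y : Fin (k + 1) → R) *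
        SV ω (Fin.cons c x : Fin (k + 1) → R) (Fin.cons d y : Fin (k + 1) → R)

theorem map_finCons {R S : Type*} (f : R → S) {n : ℕ} (a : R) (x : Fin n → R) :
    (fun i => f ((Fin.cons a x : Fin (n + 1) → R) i)) =
      (Fin.cons (f a) (fun i => f (x i)) : Fin (n + 1) → S) := by
  funext i
  cases i using Fin.cases <;> simp

theorem QuadRel.map {R S : Type*} [CommRing R] [CommRing S] (f : R →+* S) {ω a b c d : R} {k : ℕ}
    {x y : Fin k → R} (h : QuadRel ω a b c d x y) :
    QuadRel (f ω) (f a) (f b) (f c) (f d) (fun i => f (x i)) (fun i => f (y i)) := by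
  have h2 := congrArg f h
  simp only [map_mul, map_sub, map_SV, map_finCons f, map_pow, wg, wa, wb] at h2
  unfold QuadRel wg wa wb
  exact h2

theorem quadRel_of_generic_of_le_one {k : ℕ} (hk : k ≤ 1) {R : Type u} [CommRing R] [IsDomain R]
    {ω : R} (hω : ω ^ 2 + ω + 1 = 0) (h1 : ω ≠ 1) (a b c d : R) (x y : Fin k → R)
    (hbd : Function.Injective (omegaPt ω (![b, d]))) : QuadRel ω a b c d x y := by
  open Polynomial in
  have hp : C (ω ^ 2) * SVpoly ω (Fin.cons c x : Fin (k + 1) → R)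
      (Fin.cons b (Fin.cons d y : Fin (k + 1) → R) : Fin (k + 2) → R) * C (SV ω x y) *
      ((X - C c) * C (b - d)) -
    (wg (C ω) X (C b) * C (wg ω c d) * SVpoly ω x (Fin.cons d y : Fin (k + 1) → R) *
        C (SV ω (Fin.cons b x : Fin (k + 1) → R) (Fin.cons c y : Fin (k + 1) → R)) -
      wg (C ω) X (C d) * C (wg ω b c) * SVpoly ω x (Fin.cons b y : Fin (k + 1) → R) *
        C (SV ω (Fin.cons c x : Fin (k + 1) → R) (Fin.cons d y : Fin (k + 1) → R))) = 0 := by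
    refine eq_zero_of_natDegree_lt_card_of_eval_eq_zero _ hbd ?_ ?_
    · rintro ⟨j, e⟩
      simp only [eval_sub, eval_mul, eval_C, eval_X, eval_SVpoly, wg, wa, wb, eval_pow, omegaPt]
      have hu := omega_ite_or ω e
      generalize (if e then ω else ω ^ 2) = u at hu
      fin_cases j
      · simp only [Fin.zero_eta, Matrix.cons_val_zero]
        rw [SV_cons_mul hω hu, SV_cons_mul hω hu, recFactor_cons]
        have key : ω ^ 2 * (-ω ^ 2 * ((c - u ^ 2 * b) * (d - u ^ 2 * b))) *
            ((u * b - c) * (b - d)) = (b - ω ^ 2 * (u * b)) * (u * b - ω ^ 2 * b) *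
              ((d - ω ^ 2 * c) * (c - ω ^ 2 * d)) -
            (d - ω ^ 2 * (u * b)) * (u * b - ω ^ 2 * d) *
              ((c - ω ^ 2 * b) * (b - ω ^ 2 * c)) := by
          rcases hu with rfl | rfl <;> grind
        have key0 : (b - ω ^ 2 * (u * b)) * (u * b - ω ^ 2 * b) = 0 := by
          rcases hu with rfl | rfl <;> grind
        rw [key0] at key ⊢
        linear_combination (recFactor ω u b x y * SV ω x y *
          SV ω (Fin.cons c x : Fin (k + 1) → R) (Fin.cons d y : Fin (k + 1) → R)) * key
      · simp only [Fin.mk_one, Matrix.cons_val_one, Matrix.cons_val_zero]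
        rw [SV_congr_right hω _ (mset_cons_cons b d y), SV_cons_mul hω hu, SV_cons_mul hω hu,
          recFactor_cons, SV_cons_cons_swap k hω h1 b c]
        have key : ω ^ 2 * (-ω ^ 2 * ((c - u ^ 2 * d) * (b - u ^ 2 * d))) *
            ((u * d - c) * (b - d)) = (b - ω ^ 2 * (u * d)) * (u * d - ω ^ 2 * b) *
              ((d - ω ^ 2 * c) * (c - ω ^ 2 * d)) := by
          rcases hu with rfl | rfl <;> grind
        have key0 : (d - ω ^ 2 * (u * d)) * (u * d - ω ^ 2 * d) = 0 := by
          rcases hu with rfl | rfl <;> grind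
        rw [key0]
        linear_combination (recFactor ω u d x y * SV ω x y *
          SV ω (Fin.cons c x : Fin (k + 1) → R) (Fin.cons b y : Fin (k + 1) → R)) * key
    · have dg : ∀ b : R, (wg (C ω) X (C b)).natDegree ≤ 2 := by
        intro b
        unfold wg wa wb
        rw [← C_pow]
        compute_degree
      have d1 : ∀ q r : R, ∀ x : Fin k → R, ∀ y : Fin (k + 1) → R, ∀ b : R,
          (wg (C ω) X (C b) * C q * SVpoly ω x y * C r).natDegree ≤ k + 2 := by
        intro q r x y b
        refine (natDegree_mul_C_le _ _).trans (natDegree_mul_le.trans ?_)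
        have := natDegree_mul_C_le (wg (C ω) X (C b)) q
        have := dg b
        have := natDegree_SVpoly_le (ω := ω) x y
        omega
      refine lt_of_le_of_lt (b := k + 2) ?_ (by simp; omega)
      refine (natDegree_sub_le_of_le ?_ ((natDegree_sub_le_of_le (d1 _ _ _ _ _)
        (d1 _ _ _ _ _)).trans (max_self _).le)).trans (max_self _).le
      rw [mul_assoc, mul_assoc]
      refine (natDegree_C_mul_le _ _).trans (natDegree_mul_le.trans ?_)
      have := natDegree_SVpoly_le (ω := ω) (Fin.cons c x : Fin (k + 1) → R)
        (Fin.cons b (Fin.cons d y : Fin (k + 1) → R) : Fin (k + 2) → R)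
      have : (C (SV ω x y) * ((X - C c) * C (b - d))).natDegree ≤ 1 := by compute_degree
      omega
  have h2 := congrArg (Polynomial.eval a) hp
  simp only [Polynomial.eval_sub, Polynomial.eval_mul, Polynomial.eval_C, Polynomial.eval_X,
    eval_SVpoly, wg, wa, wb, Polynomial.eval_pow, Polynomial.eval_zero] at h2
  unfold QuadRel wg wa wb
  linear_combination h2

theorem quadRel_of_le_one {k : ℕ} (hk : k ≤ 1) {R : Type u} [CommRing R] [IsDomain R]
    {ω : R} (hω : ω ^ 2 + ω + 1 = 0) (h1 : ω ≠ 1) (a b c d : R) (x y : Fin k → R) :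
    QuadRel ω a b c d x y := by
  open MvPolynomial in
  have h := quadRel_of_generic_of_le_one hk (R := MvPolynomial (Fin 2) R) (C_omega hω)
    (C_omega_ne_one h1) (C a) (X 0) (C c) (X 1) (fun i => C (x i)) (fun i => C (y i)) (by
      convert omegaPt_injective hω h1 (k := 2) Function.injective_id using 2
      funext i
      fin_cases i <;> rfl)
  simpa using h.map (MvPolynomial.eval ![b, d])

theorem quadRel_cons_mul {k : ℕ} {R : Type u} [CommRing R] [IsDomain R]
    {ω : R} (hω : ω ^ 2 + ω + 1 = 0) (h1 : ω ≠ 1) {a b c d u v : R}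
    (hu : u = ω ∨ u = ω ^ 2) {x x' : Fin k → R} {y : Fin (k + 1) → R} {y' : Fin k → R}
    (h : mset x + mset y = v ::ₘ (mset x' + mset y')) (hq : QuadRel ω a b c d x' y') :
    QuadRel ω a b c d (Fin.cons (u * v) x : Fin (k + 1) → R) y := by
  have e0 : SV ω (Fin.cons (u * v) x : Fin (k + 1) → R) y =
      recFactor ω u v x' y' * SV ω x' y' := by
    rw [← SV_cons_mul hω hu]
    refine SV_congr hω h1 ?_
    simp only [mset_cons, ← Multiset.singleton_add] at h ⊢
    calc _ = {u * v} + (mset x + mset y) := by abel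
      _ = _ := by rw [h]; abel
  have e1 : ∀ a b, SV ω (Fin.cons a (Fin.cons (u * v) x : Fin (k + 1) → R) : Fin (k + 2) → R)
      (Fin.cons b y : Fin (k + 2) → R) =
      -ω ^ 2 * ((a - u ^ 2 * v) * (b - u ^ 2 * v)) * recFactor ω u v x' y' *
        SV ω (Fin.cons a x' : Fin (k + 1) → R) (Fin.cons b y' : Fin (k + 1) → R) := by
    intro a b
    rw [← recFactor_cons, ← SV_cons_mul hω hu]
    refine SV_congr hω h1 ?_
    simp only [mset_cons, ← Multiset.singleton_add] at h ⊢
    calc _ = {u * v} + {a} + {b} + (mset x + mset y) := by abel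
      _ = _ := by rw [h]; abel
  have e2 : SV ω (Fin.cons a (Fin.cons c (Fin.cons (u * v) x : Fin (k + 1) → R) :
        Fin (k + 2) → R) : Fin (k + 3) → R)
      (Fin.cons b (Fin.cons d y : Fin (k + 2) → R) : Fin (k + 3) → R) =
      -ω ^ 2 * ((a - u ^ 2 * v) * (b - u ^ 2 * v)) *
        (-ω ^ 2 * ((c - u ^ 2 * v) * (d - u ^ 2 * v)) * recFactor ω u v x' y') *
        SV ω (Fin.cons a (Fin.cons c x' : Fin (k + 1) → R) : Fin (k + 2) → R)
          (Fin.cons b (Fin.cons d y' : Fin (k + 1) → R) : Fin (k + 2) → R) := by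
    rw [← recFactor_cons, ← recFactor_cons, ← SV_cons_mul hω hu]
    refine SV_congr hω h1 ?_
    simp only [mset_cons, ← Multiset.singleton_add] at h ⊢
    calc _ = {u * v} + {a} + {b} + {c} + {d} + (mset x + mset y) := by abel
      _ = _ := by rw [h]; abel
  unfold QuadRel at hq ⊢
  rw [e2, e0, e1, e1, e1, e1]
  linear_combination (ω ^ 4 * ((a - u ^ 2 * v) * (b - u ^ 2 * v) * (c - u ^ 2 * v) *
    (d - u ^ 2 * v)) * recFactor ω u v x' y' ^ 2) * hq

theorem quadRel_step_generic {k : ℕ} {R : Type u} [CommRing R] [IsDomain R]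
    {ω : R} (hω : ω ^ 2 + ω + 1 = 0) (h1 : ω ≠ 1) (a b c d t e : R)
    (x : Fin k → R) (y : Fin (k + 2) → R)
    (hq : ∀ x' y' : Fin (k + 1) → R, QuadRel ω a b c d x' y')
    (hey : Function.Injective (omegaPt ω (Fin.cons e y : Fin (k + 3) → R))) :
    QuadRel ω a b c d (Fin.cons t (Fin.cons e x : Fin (k + 1) → R) : Fin (k + 2) → R) y := by
  have hz : ∀ p : Fin (k + 3) × Bool,
      QuadRel ω a b c d
        (Fin.cons (omegaPt ω (Fin.cons e y : Fin (k + 3) → R) p)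
          (Fin.cons e x : Fin (k + 1) → R) : Fin (k + 2) → R) y := by
    rintro ⟨j, s⟩
    rw [omegaPt]
    cases j using Fin.cases with
    | zero =>
      refine quadRel_cons_mul hω h1 (omega_ite_or ω s)
        (x' := (Fin.cons (y 0) x : Fin (k + 1) → R)) (y' := Fin.tail y) ?_ (hq _ _)
      have hy := mset_cons (y 0) (Fin.tail y)
      rw [Fin.cons_self_tail] at hy
      simp only [Fin.cons_zero, mset_cons, hy, ← Multiset.singleton_add]
      abel
    | succ j =>
      refine quadRel_cons_mul hω h1 (omega_ite_or ω s)
        (x' := (Fin.cons e x : Fin (k + 1) → R)) (y' := j.removeNth y) ?_ (hq _ _)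
      simp only [Fin.cons_succ, mset_cons, mset_removeNth y j, ← Multiset.singleton_add]
      abel
  generalize (Fin.cons e x : Fin (k + 1) → R) = z at hz ⊢
  have hQ : ∀ w, QuadRel ω a b c d (Fin.cons w z : Fin (k + 2) → R) y ↔
      ω ^ 2 * SV ω (Fin.cons w (Fin.cons a (Fin.cons c z : Fin (k + 2) → R) : Fin (k + 3) → R) :
          Fin (k + 4) → R)
          (Fin.cons b (Fin.cons d y : Fin (k + 3) → R) : Fin (k + 4) → R) *
          SV ω (Fin.cons w z : Fin (k + 2) → R) y * ((a - c) * (b - d)) =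
        wg ω a b * wg ω c d *
          SV ω (Fin.cons w (Fin.cons a z : Fin (k + 2) → R) : Fin (k + 3) → R)
            (Fin.cons d y : Fin (k + 3) → R) *
          SV ω (Fin.cons w (Fin.cons b z : Fin (k + 2) → R) : Fin (k + 3) → R)
            (Fin.cons c y : Fin (k + 3) → R) -
        wg ω a d * wg ω b c *
          SV ω (Fin.cons w (Fin.cons a z : Fin (k + 2) → R) : Fin (k + 3) → R)
            (Fin.cons b y : Fin (k + 3) → R) *
          SV ω (Fin.cons w (Fin.cons c z : Fin (k + 2) → R) : Fin (k + 3) → R)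
            (Fin.cons d y : Fin (k + 3) → R) := by
    intro w
    have e : mset (Fin.cons w (Fin.cons a (Fin.cons c z : Fin (k + 2) → R) : Fin (k + 3) → R) :
          Fin (k + 4) → R) =
        mset (Fin.cons a (Fin.cons c (Fin.cons w z : Fin (k + 2) → R) : Fin (k + 3) → R) :
          Fin (k + 4) → R) := by
      simp only [mset_cons, ← Multiset.singleton_add]
      abel
    rw [SV_congr_left hω _ e, SV_congr_left hω _ (mset_cons_cons w a z),
      SV_congr_left hω _ (mset_cons_cons w b z), SV_congr_left hω _ (mset_cons_cons w a z),
      SV_congr_left hω _ (mset_cons_cons w c z), QuadRel]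
  simp only [hQ] at hz ⊢
  open Polynomial in
  have hp : C (ω ^ 2) * SVpoly ω (Fin.cons a (Fin.cons c z : Fin (k + 2) → R) : Fin (k + 3) → R)
          (Fin.cons b (Fin.cons d y : Fin (k + 3) → R) : Fin (k + 4) → R) *
          SVpoly ω z y * C ((a - c) * (b - d)) -
        (C (wg ω a b * wg ω c d) *
          SVpoly ω (Fin.cons a z : Fin (k + 2) → R) (Fin.cons d y : Fin (k + 3) → R) *
          SVpoly ω (Fin.cons b z : Fin (k + 2) → R) (Fin.cons c y : Fin (k + 3) → R) -
        C (wg ω a d * wg ω b c) *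
          SVpoly ω (Fin.cons a z : Fin (k + 2) → R) (Fin.cons b y : Fin (k + 3) → R) *
          SVpoly ω (Fin.cons c z : Fin (k + 2) → R) (Fin.cons d y : Fin (k + 3) → R)) = 0 := by
    refine eq_zero_of_natDegree_lt_card_of_eval_eq_zero _ hey ?_ ?_
    · intro p
      simp only [eval_sub, eval_mul, eval_C, eval_SVpoly]
      exact sub_eq_zero.2 (hz p)
    · have d1 : ∀ (q : R) (z z' : Fin (k + 2) → R) (y y' : Fin (k + 3) → R),
          (C q * SVpoly ω z y * SVpoly ω z' y').natDegree ≤ 2 * k + 4 := by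
        intro q z z' y y'
        rw [mul_assoc]
        refine (natDegree_C_mul_le _ _).trans (natDegree_mul_le.trans ?_)
        have := natDegree_SVpoly_le (ω := ω) z y
        have := natDegree_SVpoly_le (ω := ω) z' y'
        omega
      refine lt_of_le_of_lt (b := 2 * k + 4) ?_ (by simp; omega)
      refine (natDegree_sub_le_of_le ?_ ((natDegree_sub_le_of_le (d1 _ _ _ _ _)
        (d1 _ _ _ _ _)).trans (max_self _).le)).trans (max_self _).le
      refine (natDegree_mul_C_le _ _).trans ?_
      rw [mul_assoc]
      refine (natDegree_C_mul_le _ _).trans (natDegree_mul_le.trans ?_)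
      have := natDegree_SVpoly_le (ω := ω) (Fin.cons a (Fin.cons c z : Fin (k + 2) → R) :
        Fin (k + 3) → R) (Fin.cons b (Fin.cons d y : Fin (k + 3) → R) : Fin (k + 4) → R)
      have := natDegree_SVpoly_le (ω := ω) z y
      omega
  have h2 := congrArg (Polynomial.eval t) hp
  simp only [Polynomial.eval_sub, Polynomial.eval_mul, Polynomial.eval_C, eval_SVpoly,
    Polynomial.eval_zero] at h2
  exact sub_eq_zero.1 h2

theorem quadRel (k : ℕ) : ∀ {R : Type u} [CommRing R] [IsDomain R]
    {ω : R} (_ : ω ^ 2 + ω + 1 = 0) (_ : ω ≠ 1) (a b c d : R) (x y : Fin k → R),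
    QuadRel ω a b c d x y := by
  induction k with
  | zero => intro R _ _ ω hω h1; exact quadRel_of_le_one zero_le_one hω h1
  | succ k ih =>
    cases k with
    | zero => intro R _ _ ω hω h1; exact quadRel_of_le_one le_rfl hω h1
    | succ k =>
      intro R _ _ ω hω h1 a b c d x y
      obtain ⟨t, x, rfl⟩ : ∃ (t : R) (x' : Fin (k + 1) → R), x = Fin.cons t x' :=
        ⟨x 0, Fin.tail x, (Fin.cons_self_tail x).symm⟩
      obtain ⟨e, x, rfl⟩ : ∃ (e : R) (x' : Fin k → R), x = Fin.cons e x' :=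
        ⟨x 0, Fin.tail x, (Fin.cons_self_tail x).symm⟩
      open MvPolynomial in
      have h := quadRel_step_generic (R := MvPolynomial (Fin (k + 3)) R) (C_omega hω)
        (C_omega_ne_one h1) (C a) (C b) (C c) (C d) (C t) (X 0) (fun i => C (x i))
        (fun j => X j.succ) (ih (C_omega hω) (C_omega_ne_one h1) _ _ _ _) (by
          convert omegaPt_injective hω h1 (k := k + 3) Function.injective_id using 2
          funext i
          cases i using Fin.cases <;> rfl)
      have h2 := h.map (MvPolynomial.eval (Fin.cons e y : Fin (k + 3) → R))
      simpa only [map_finCons, MvPolynomial.eval_C, MvPolynomial.eval_X, Fin.cons_zero,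
        Fin.cons_succ] using h2

end star

section boundary

variable {R : Type*} [CommRing R]

theorem pf_gauge {n : ℕ} (a b c : Fin (n + 1) → Fin (n + 1) → R) (l m : Fin (n + 1) → R) :
    pf (fun i j => l i * m j * a i j) (fun i j => l i * m j * b i j)
      (fun i j => (l i * m j) ^ 2 * c i j) =
    (∏ i, l i) ^ n * (∏ j, m j) ^ n * pf a b c := by
  classical
  have hsum : ∀ f : Fin (n + 1) → ℤ, IsAlt f → ∑ j, (1 - f j).toNat = n := by
    intro f hf
    have h1 : ∀ j, ((1 - f j).toNat : ℤ) = 1 - f j := fun j =>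
      Int.toNat_of_nonneg (by rcases hf.mem j with h | h | h <;> omega)
    zify
    rw [sum_congr rfl fun j _ => h1 j, sum_sub_distrib, hf.sum_eq]
    simp
  unfold pf
  rw [mul_sum]
  refine sum_congr rfl fun e _ => ?_
  split_ifs with h
  · have hv : ∀ i j, vw (fun i j => l i * m j * a i j) (fun i j => l i * m j * b i j)
        (fun i j => (l i * m j) ^ 2 * c i j) (asmMat e) i j =
        l i ^ (1 - asmMat e i j).toNat * m j ^ (1 - asmMat e i j).toNat *
          vw a b c (asmMat e) i j := by
      intro i j
      rcases h.1 i j with h1 | h1 | h1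
      · simp [vw, h1, mul_pow]
      · have h2 : (0 : ℤ) ≠ 1 := by decide
        have h3 : (0 : ℤ) ≠ -1 := by decide
        rw [vw, vw, h1, if_neg h2, if_neg h3, if_neg h2, if_neg h3]
        split_ifs <;> simp
      · simp [vw, h1]
    simp only [hv, prod_mul_distrib]
    congr 2
    · rw [← prod_pow]
      refine prod_congr rfl fun i _ => ?_
      rw [prod_pow_eq_pow_sum, hsum _ (h.rowAlt i)]
    · rw [← prod_pow, prod_comm]
      refine prod_congr rfl fun j _ => ?_
      rw [prod_pow_eq_pow_sum, hsum _ (h.colAlt j)]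
  · simp

theorem IsAlt.pre_succ_zero {n : ℕ} (f : Fin (n + 1) → ℤ) : pre f (Fin.succ 0) = f 0 := by
  rw [pre_succ, Fin.castSucc_zero, pre_zero, zero_add]

theorem IsAlt.pre_succ_last {n : ℕ} {f : Fin (n + 1) → ℤ} (h : IsAlt f) :
    pre f (Fin.succ (Fin.last n)) = 1 := by
  rw [Fin.succ_last, pre_last, h.sum_eq]

theorem pf_congr_boundary {n : ℕ} {a b c a' b' c' : Fin (n + 1) → Fin (n + 1) → R}
    (ha : ∀ i j, ¬(i = 0 ∧ j = 0) → ¬(i = Fin.last n ∧ j = Fin.last n) → a i j = a' i j)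
    (hb : ∀ i j, ¬(i = 0 ∧ j = Fin.last n) → ¬(i = Fin.last n ∧ j = 0) → b i j = b' i j)
    (hc : ∀ i j, i ≠ 0 → i ≠ Fin.last n → j ≠ 0 → j ≠ Fin.last n → c i j = c' i j) :
    pf a b c = pf a' b' c' := by
  classical
  unfold pf
  refine sum_congr rfl fun e _ => ?_
  split_ifs with h
  · refine prod_congr rfl fun i _ => prod_congr rfl fun j _ => ?_
    simp only [vw]
    have hr := h.rowAlt i
    have hcl := h.colAlt j
    split_ifs with h1 h2 h3
    · rfl
    · apply hc
      · rintro rfl; have := hcl.zero_nonneg; omega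
      · rintro rfl; have := hcl.last_nonneg; omega
      · rintro rfl; have := hr.zero_nonneg; omega
      · rintro rfl; have := hr.last_nonneg; omega
    · apply hb
      · rintro ⟨rfl, rfl⟩
        rw [hr.pre_succ_last, IsAlt.pre_succ_zero] at h3
        exact h1 h3.symm
      · rintro ⟨rfl, rfl⟩
        rw [hcl.pre_succ_last, IsAlt.pre_succ_zero] at h3
        exact h1 h3
    · apply ha
      · rintro ⟨rfl, rfl⟩
        rw [IsAlt.pre_succ_zero, IsAlt.pre_succ_zero] at h3
        exact h3 rfl
      · rintro ⟨rfl, rfl⟩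
        rw [hcl.pre_succ_last, hr.pre_succ_last] at h3
        exact h3 rfl
  · rfl

theorem pf_affine {n : ℕ} {a b b' b'' c : Fin (n + 1) → Fin (n + 1) → R}
    (h' : ∀ i j, ¬(i = 0 ∧ j = 0) → b' i j = b i j)
    (h'' : ∀ i j, ¬(i = 0 ∧ j = 0) → b'' i j = b i j) (h0 : b'' 0 0 = 0) :
    b' 0 0 * pf a b c = b 0 0 * pf a b' c + (b' 0 0 - b 0 0) * pf a b'' c := by
  classical
  unfold pf
  rw [mul_sum, mul_sum, mul_sum, ← sum_add_distrib]
  refine sum_congr rfl fun e _ => ?_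
  split_ifs with h
  · have key : ∀ d : Fin (n + 1) → Fin (n + 1) → R,
        (∀ i j, ¬(i = 0 ∧ j = 0) → d i j = b i j) →
        ∏ i, ∏ j, vw a d c (asmMat e) i j = vw a d c (asmMat e) 0 0 *
          ∏ p ∈ univ.erase (0, 0), vw a b c (asmMat e) p.1 p.2 := by
      intro d hd
      rw [← Fintype.prod_prod_type', ← mul_prod_erase univ _ (mem_univ (0, 0))]
      congr 1
      refine prod_congr rfl fun p hp => ?_
      have : ¬(p.1 = 0 ∧ p.2 = 0) := by
        intro h0
        exact (mem_erase.1 hp).1 (Prod.ext h0.1 h0.2)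
      simp only [vw, hd _ _ this]
    rw [key b fun _ _ _ => rfl, key b' h', key b'' h'']
    simp only [vw, h0]
    split_ifs <;> ring
  · simp

/-- Weights of the six-vertex model distinguishing the zeros on the left and right boundaries;
`d2` and `d4` are the weights of the corners. -/
def sideW {m : ℕ} (z2 z4 d2 d4 : R) (i j : Fin (m + 2)) : R :=
  if j = Fin.last (m + 1) then (if i = 0 then d2 else z2)
  else if j = 0 then (if i = Fin.last (m + 1) then d4 else z4) else 1

theorem sideW_rev {m : ℕ} (z2 z4 d2 d4 : R) (i j : Fin (m + 2)) :
    sideW z2 z4 d2 d4 i.rev j.rev = sideW z4 z2 d4 d2 i j := by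
  have h1 : ∀ k : Fin (m + 2), k.rev = Fin.last (m + 1) ↔ k = 0 := fun k => by
    rw [Fin.rev_eq_iff, Fin.rev_last]
  have h2 : ∀ k : Fin (m + 2), k.rev = 0 ↔ k = Fin.last (m + 1) := fun k => by
    rw [Fin.rev_eq_iff, Fin.rev_zero]
  simp only [sideW, h1, h2]
  by_cases h : j = 0
  · subst h
    simp [Fin.last_pos.ne]
  · simp [h]

/-- The partition function of the model with weights concentrated on the boundary: `z1`, `z2`,
`z3`, `z4` refer to the top, right, bottom and left sides, and `d1`, `d2`, `d3`, `d4` to the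
top-left, top-right, bottom-right and bottom-left corners. -/
noncomputable def pfB (m : ℕ) (z1 z2 z3 z4 d1 d2 d3 d4 : R) : R :=
  pf (n := m + 2) (fun i j => sideW z2 z4 d2 d4 i j) (fun i j => sideW z1 z3 d1 d3 j i.rev)
    (fun _ _ => 1)

theorem pfB_rotate (m : ℕ) (z1 z2 z3 z4 d1 d2 d3 d4 : R) :
    pfB m z1 z2 z3 z4 d1 d2 d3 d4 = pfB m z2 z3 z4 z1 d2 d3 d4 d1 := by
  rw [pfB, ← pf_transpose, ← pf_flip, pfB]
  simp only [sideW_rev]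

theorem pfB_affine (m : ℕ) (z1 z2 z3 z4 d1 d1' d2 d3 d4 : R) :
    d1' * pfB m z1 z2 z3 z4 d1 d2 d3 d4 =
      d1 * pfB m z1 z2 z3 z4 d1' d2 d3 d4 + (d1' - d1) * pfB m z1 z2 z3 z4 0 d2 d3 d4 := by
  have h (t : R) : sideW z1 z3 t d3 (0 : Fin (m + 2)) (Fin.rev 0) = t := by
    simp [sideW]
  have h' (t t' : R) (i j : Fin (m + 2)) (hij : ¬(i = 0 ∧ j = 0)) :
      sideW z1 z3 t d3 j i.rev = sideW z1 z3 t' d3 j i.rev := by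
    have h1 : i.rev = Fin.last (m + 1) ↔ i = 0 := by rw [Fin.rev_eq_iff, Fin.rev_last]
    simp only [sideW, h1]
    split_ifs with h1 h2
    · exact absurd ⟨h1, h2⟩ hij
    all_goals rfl
  simpa only [h, pfB] using pf_affine (a := fun i j => sideW z2 z4 d2 d4 i j)
    (b := fun i j : Fin (m + 2) => sideW z1 z3 d1 d3 j i.rev)
    (b' := fun i j => sideW z1 z3 d1' d3 j i.rev) (b'' := fun i j => sideW z1 z3 0 d3 j i.rev)
    (c := fun _ _ => 1) (h' _ _) (h' _ _) (h 0)

theorem pfB_corner_aux (m : ℕ) (z1 z2 z3 z4 d2 d3 d4 : R) :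
    pfB m z1 z2 z3 z4 0 d2 d3 d4 = d2 * (z4 ^ m * d4) *
      pf (n := m + 1) (fun _ j => if j = Fin.last m then z2 else 1)
        (fun i j => if i = Fin.last m then (if j = Fin.last m then d3 else z3) else 1)
        (fun _ _ => 1) := by
  have h2 : ∀ k : Fin (m + 2), k.rev = 0 ↔ k = Fin.last (m + 1) := fun k => by
    rw [Fin.rev_eq_iff, Fin.rev_zero]
  have h1 : ∀ k : Fin (m + 2), k.rev = Fin.last (m + 1) ↔ k = 0 := fun k => by
    rw [Fin.rev_eq_iff, Fin.rev_last]
  have h3 : ∀ k : Fin (m + 1), k.succ = Fin.last (m + 1) ↔ k = Fin.last m := fun k => by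
    rw [← Fin.succ_last, Fin.succ_inj]
  have h4 : (0 : Fin (m + 2)) ≠ Fin.last (m + 1) := Fin.last_pos.ne
  rw [pfB, pf_corner _ _ _ (by simp [sideW])]
  simp only [sideW, h1, h2, h3, Fin.succ_ne_zero, if_false, if_true, h4]
  congr 1
  rw [Fin.prod_univ_castSucc, Fin.prod_univ_castSucc]
  simp [Fin.castSucc_ne_last]

theorem pfB_corner (m : ℕ) (z1 z2 z3 z4 d2 d3 d4 : R) :
    pfB (m + 1) z1 z2 z3 z4 0 d2 d3 d4 =
      d2 * (z4 ^ (m + 1) * d4) * pfB m 1 z2 z3 1 1 z2 d3 1 := by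
  have h1 : ∀ k : Fin (m + 2), k.rev = Fin.last (m + 1) ↔ k = 0 := fun k => by
    rw [Fin.rev_eq_iff, Fin.rev_last]
  have h2 : ∀ k : Fin (m + 2), k.rev = 0 ↔ k = Fin.last (m + 1) := fun k => by
    rw [Fin.rev_eq_iff, Fin.rev_zero]
  have h4 : (0 : Fin (m + 2)) ≠ Fin.last (m + 1) := Fin.last_pos.ne
  have ha : (fun _ j => if j = Fin.last (m + 1) then z2 else 1) =
      (fun i j : Fin (m + 2) => sideW z2 1 z2 1 i j) := by
    funext i j
    simp only [sideW, ite_self]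
  have hb : (fun i j => if i = Fin.last (m + 1) then
      (if j = Fin.last (m + 1) then d3 else z3) else 1) =
      (fun i j : Fin (m + 2) => sideW 1 z3 1 d3 j i.rev) := by
    funext i j
    simp only [sideW, h1, h2, ite_self]
    by_cases h : i = 0
    · subst h; simp only [h4, if_false, if_true]
    · simp only [h, if_false]
  rw [pfB_corner_aux, pfB, ha, hb]

theorem pf_one (n : ℕ) :
    pf (n := n) (fun _ _ => (1 : R)) (fun _ _ => 1) (fun _ _ => 1) = numASM n := by
  classical
  unfold pf numASM
  simp only [vw, ite_self, prod_const_one]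
  rw [sum_boole]

theorem pfB_corner_corner (m : ℕ) (z w : R) :
    pfB m 1 z w 1 1 z 0 1 = z ^ (m + 1) * numASM (m + 1) := by
  rw [pfB_rotate, pfB_rotate, pfB_corner_aux]
  simp only [ite_self]
  rw [pf_one]
  ring

/-- The expansion of the boundary partition function in terms of its corner weights. -/
theorem pfB_expand (m : ℕ) (z1 z2 z3 z4 l1 l2 l3 l4 : R) :
    l1 * l2 * l3 * l4 * pfB (m + 1) z1 z2 z3 z4 z1 z2 z3 z4 =
      z1 * z2 * z3 * z4 * pfB (m + 1) z1 z2 z3 z4 l1 l2 l3 l4 +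
      (l3 - z3) * l2 * l4 * z4 * z1 * z2 ^ (m + 2) * pfB m 1 z4 z1 1 1 z4 l1 1 +
      (l4 - z4) * l3 * l1 * z1 * z2 * z3 ^ (m + 2) * pfB m 1 z1 z2 1 1 z1 l2 1 +
      (l1 - z1) * l4 * l2 * z2 * z3 * z4 ^ (m + 2) * pfB m 1 z2 z3 1 1 z2 l3 1 +
      (l2 - z2) * l1 * l3 * z3 * z4 * z1 ^ (m + 2) * pfB m 1 z3 z4 1 1 z3 l4 1 +
      ((l1 - z1) * (l3 - z3) * l2 * l4 * (z2 * z4) ^ (m + 2) +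
        (l2 - z2) * (l4 - z4) * l1 * l3 * (z1 * z3) ^ (m + 2)) * numASM (m + 1) := by
  have r1 : ∀ d1 d2 d3 d4, pfB (m + 1) z1 z2 z3 z4 d1 d2 d3 d4 =
      pfB (m + 1) z2 z3 z4 z1 d2 d3 d4 d1 := pfB_rotate _ _ _ _ _
  have r2 : ∀ d1 d2 d3 d4, pfB (m + 1) z1 z2 z3 z4 d1 d2 d3 d4 =
      pfB (m + 1) z3 z4 z1 z2 d3 d4 d1 d2 := fun _ _ _ _ => (r1 _ _ _ _).trans (pfB_rotate ..)
  have r3 : ∀ d1 d2 d3 d4, pfB (m + 1) z1 z2 z3 z4 d1 d2 d3 d4 =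
      pfB (m + 1) z4 z1 z2 z3 d4 d1 d2 d3 := fun _ _ _ _ => (r2 _ _ _ _).trans (pfB_rotate ..)
  have a1 := pfB_affine (m + 1) z1 z2 z3 z4 z1 l1 z2 z3 z4
  have a2 := pfB_affine (m + 1) z2 z3 z4 z1 z2 l2 z3 z4 l1
  have a3 := pfB_affine (m + 1) z3 z4 z1 z2 z3 l3 z4 l1 l2
  have a4 := pfB_affine (m + 1) z4 z1 z2 z3 z4 l4 l1 l2 l3
  have c1 := pfB_corner m z1 z2 z3 z4 z2 z3 z4
  have c2 := pfB_corner m z2 z3 z4 z1 z3 z4 l1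
  have c3 := pfB_corner m z3 z4 z1 z2 z4 l1 l2
  have c4 := pfB_corner m z4 z1 z2 z3 l1 l2 l3
  simp only [← r1] at a2 c2
  simp only [← r2] at a3 c3
  simp only [← r3] at a4 c4
  have b (z w l : R) : l * pfB m 1 z w 1 1 z w 1 =
      w * pfB m 1 z w 1 1 z l 1 + (l - w) * (z ^ (m + 1) * numASM (m + 1)) := by
    have hb (d : R) : pfB m 1 z w 1 1 z d 1 = pfB m w 1 1 z d 1 1 z := by
      rw [pfB_rotate, pfB_rotate]
    rw [← pfB_corner_corner m z w, hb, hb, hb, pfB_affine]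
  linear_combination l2 * l3 * l4 * a1 + z1 * l3 * l4 * a2 + z1 * z2 * l4 * a3 +
    z1 * z2 * z3 * a4 + (l1 - z1) * l2 * l3 * l4 * c1 +
    (l1 - z1) * l2 * l4 * z2 * z4 ^ (m + 2) * b z2 z3 l3 + z1 * (l2 - z2) * l3 * l4 * c2 +
    z1 * (l2 - z2) * l3 * l1 * z3 * z1 ^ (m + 1) * b z3 z4 l4 + z1 * z2 * (l3 - z3) * l4 * c3 +
    z1 * z2 * z3 * (l4 - z4) * c4

end boundary

section statistics

variable {n : ℕ} {f : Fin n → ℤ}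

theorem IsAlt.exists_lt_iff (h : IsAlt f) (hf : ∀ j, 0 ≤ f j) {j : Fin n} (hj : f j = 0) :
    (∃ j' < j, f j' = 1) ↔ pre f j.succ = 1 := by
  rw [pre_succ_eq_le]
  constructor
  · rintro ⟨j', hlt, h1⟩
    have h2 := single_le_sum (f := f) (s := univ.filter fun j' => j' ≤ j) (fun i _ => hf i)
      (mem_filter.2 ⟨mem_univ j', hlt.le⟩)
    rcases h.pre_mem j.succ with h3 | h3 <;> rw [pre_succ_eq_le] at h3 <;> omega
  · intro hs
    obtain ⟨j', hj', hne⟩ := exists_ne_zero_of_sum_ne_zero (by rw [hs]; exact one_ne_zero)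
    have hle := (mem_filter.1 hj').2
    refine ⟨j', lt_of_le_of_ne hle (by rintro rfl; exact hne hj), ?_⟩
    have := hf j'
    rcases h.mem j' with h1 | h1 | h1 <;> omega

theorem IsAlt.exists_gt_iff (h : IsAlt f) (hf : ∀ j, 0 ≤ f j) {j : Fin n} (hj : f j = 0) :
    (∃ j', j < j' ∧ f j' = 1) ↔ pre f j.succ = 0 := by
  constructor
  · rintro ⟨j', hlt, h1⟩
    rcases h.pre_mem j.succ with h3 | h3
    · exact h3
    · obtain ⟨j'', hlt', h1'⟩ := (h.exists_lt_iff hf hj).2 h3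
      have h2 := sum_le_univ_sum_of_nonneg (f := f) (s := {j', j''}) hf
      rw [h.sum_eq, sum_pair (hlt'.trans hlt).ne'] at h2
      omega
  · intro hs
    obtain ⟨j', -, hne⟩ := exists_ne_zero_of_sum_ne_zero (s := univ) (f := f)
      (by rw [h.sum_eq]; exact one_ne_zero)
    have h1 : f j' = 1 := by
      have := hf j'
      rcases h.mem j' with h1 | h1 | h1 <;> omega
    refine ⟨j', ?_, h1⟩
    rcases lt_trichotomy j j' with h2 | rfl | h2
    · exact h2
    · omega
    · rw [(h.exists_lt_iff hf hj).1 ⟨j', h2, h1⟩] at hs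
      omega

theorem IsAlt.card_pre_zero_add_card_pre_one (h : IsAlt f) (hf : ∀ j, 0 ≤ f j) :
    #{j | f j = 0 ∧ pre f j.succ = 0} + #{j | f j = 0 ∧ pre f j.succ = 1} + 1 = n := by
  have h1 : #{j | f j ≠ 0} = 1 := by
    have : ∀ j, f j = if f j ≠ 0 then 1 else 0 := fun j => by
      have := hf j
      rcases h.mem j with h1 | h1 | h1 <;> simp [h1]; omega
    have h2 := h.sum_eq
    rw [sum_congr rfl fun j _ => this j, sum_boole] at h2
    exact_mod_cast h2
  have h2 := card_filter_add_card_filter_not (s := (univ : Finset (Fin n))) (fun j => f j = 0)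
  have h3 := card_filter_add_card_filter_not (s := univ.filter fun j => f j = 0)
    (fun j => pre f j.succ = 0)
  rw [filter_filter, filter_filter] at h3
  have h4 : (univ.filter fun j => f j = 0 ∧ ¬pre f j.succ = 0) =
      univ.filter fun j => f j = 0 ∧ pre f j.succ = 1 := by
    refine filter_congr fun j _ => and_congr_right fun _ => ?_
    rcases h.pre_mem j.succ with h5 | h5 <;> simp [h5]
  rw [h4] at h3
  rw [card_univ, Fintype.card_fin] at h2
  simp only [ne_eq] at h1
  omega

end statistics

section link

variable {m : ℕ} {e : Fin (m + 2) → Fin (m + 2) → Fin 3}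

theorem card_row_zero (h : IsASM (asmMat e)) :
    #{j | asmMat e 0 j = 0 ∧
      pre (asmMat e 0) j.succ = pre (fun i => asmMat e i j) (Fin.succ 0)} = rhoT (asmMat e) := by
  unfold rhoT
  refine congrArg card (filter_congr fun j _ => and_congr_right fun hj => ?_)
  have hf : ∀ j, 0 ≤ asmMat e 0 j := fun j => (h.colAlt j).zero_nonneg
  rw [IsAlt.pre_succ_zero, hj]
  exact ((h.rowAlt 0).exists_gt_iff hf hj).symm

theorem card_row_last (h : IsASM (asmMat e)) :
    #{j | asmMat e (Fin.last (m + 1)) j = 0 ∧ pre (asmMat e (Fin.last (m + 1))) j.succ =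
      pre (fun i => asmMat e i j) (Fin.last (m + 1)).succ} = rhoB (asmMat e) := by
  unfold rhoB
  refine congrArg card (filter_congr fun j _ => and_congr_right fun hj => ?_)
  have hf : ∀ j, 0 ≤ asmMat e (Fin.last (m + 1)) j := fun j => (h.colAlt j).last_nonneg
  rw [(h.colAlt j).pre_succ_last]
  exact ((h.rowAlt _).exists_lt_iff hf hj).symm

theorem card_col_zero (h : IsASM (asmMat e)) :
    #{i | asmMat e i 0 = 0 ∧ pre (asmMat e i) (Fin.succ 0) ≠ pre (fun i => asmMat e i 0) i.succ} =
      m + 2 - 1 - rhoL (asmMat e) := by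
  have hf : ∀ i, 0 ≤ asmMat e i 0 := fun i => (h.rowAlt i).zero_nonneg
  have h1 := (h.colAlt 0).card_pre_zero_add_card_pre_one hf
  have h2 : rhoL (asmMat e) =
      #{i | asmMat e i 0 = 0 ∧ pre (fun i => asmMat e i 0) i.succ = 0} :=
    congrArg card (filter_congr fun i _ => and_congr_right fun hi =>
      (h.colAlt 0).exists_gt_iff hf hi)
  have h3 : #{i | asmMat e i 0 = 0 ∧
      pre (asmMat e i) (Fin.succ 0) ≠ pre (fun i => asmMat e i 0) i.succ} =
      #{i | asmMat e i 0 = 0 ∧ pre (fun i => asmMat e i 0) i.succ = 1} := by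
    refine congrArg card (filter_congr fun i _ => and_congr_right fun hi => ?_)
    rw [IsAlt.pre_succ_zero, hi]
    rcases (h.colAlt 0).pre_mem i.succ with h5 | h5 <;> simp [h5]
  omega

theorem card_col_last (h : IsASM (asmMat e)) :
    #{i | asmMat e i (Fin.last (m + 1)) = 0 ∧ pre (asmMat e i) (Fin.last (m + 1)).succ ≠
      pre (fun i => asmMat e i (Fin.last (m + 1))) i.succ} = m + 2 - 1 - rhoR (asmMat e) := by
  have hf : ∀ i, 0 ≤ asmMat e i (Fin.last (m + 1)) := fun i => (h.rowAlt i).last_nonneg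
  have h1 := (h.colAlt (Fin.last (m + 1))).card_pre_zero_add_card_pre_one hf
  have h2 : rhoR (asmMat e) = #{i | asmMat e i (Fin.last (m + 1)) = 0 ∧
      pre (fun i => asmMat e i (Fin.last (m + 1))) i.succ = 1} :=
    congrArg card (filter_congr fun i _ => and_congr_right fun hi =>
      (h.colAlt (Fin.last (m + 1))).exists_lt_iff hf hi)
  have h3 : #{i | asmMat e i (Fin.last (m + 1)) = 0 ∧ pre (asmMat e i) (Fin.last (m + 1)).succ ≠
      pre (fun i => asmMat e i (Fin.last (m + 1))) i.succ} =
      #{i | asmMat e i (Fin.last (m + 1)) = 0 ∧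
        pre (fun i => asmMat e i (Fin.last (m + 1))) i.succ = 0} := by
    refine congrArg card (filter_congr fun i _ => and_congr_right fun hi => ?_)
    rw [(h.rowAlt i).pre_succ_last]
    rcases (h.colAlt (Fin.last (m + 1))).pre_mem i.succ with h5 | h5 <;> simp [h5]
  omega

variable {R : Type*} [CommRing R]

theorem prod_ite_pow_boundary (p : Fin (m + 2) → Fin (m + 2) → Prop) [∀ i j, Decidable (p i j)]
    (x y : R) :
    ∏ i, ∏ j, (if p i j then (if i = 0 then x else if i = Fin.last (m + 1) then y else 1) else 1) =
      x ^ #{j | p 0 j} * y ^ #{j | p (Fin.last (m + 1)) j} := by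
  have hw : ∀ (i : Fin (m + 2)) (w : R), ∏ j, (if p i j then w else 1) = w ^ #{j | p i j} := by
    intro i w
    rw [prod_ite, prod_const, prod_const_one, mul_one]
  simp only [hw]
  rw [Fin.prod_univ_succ, Fin.prod_univ_castSucc]
  have h4 : Fin.last (m + 1) ≠ 0 := Fin.last_pos.ne'
  simp only [Fin.succ_last, Nat.succ_eq_add_one, h4, if_true, if_false]
  rw [prod_eq_one, one_mul]
  intro i _
  rw [if_neg (Fin.succ_ne_zero _), if_neg, one_pow]
  rw [← Fin.succ_last, Fin.succ_inj]
  exact Fin.castSucc_ne_last i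

theorem prod_vw_boundary (h : IsASM (asmMat e)) (z1 z2 z3 z4 : R) :
    ∏ i, ∏ j, vw (fun i j => sideW z2 z4 z2 z4 i j) (fun i j => sideW z1 z3 z1 z3 j i.rev)
      (fun _ _ => 1) (asmMat e) i j =
    z1 ^ rhoT (asmMat e) * z2 ^ (m + 2 - 1 - rhoR (asmMat e)) * z3 ^ rhoB (asmMat e) *
      z4 ^ (m + 2 - 1 - rhoL (asmMat e)) := by
  have h1 : ∀ k : Fin (m + 2), k.rev = Fin.last (m + 1) ↔ k = 0 := fun k => by
    rw [Fin.rev_eq_iff, Fin.rev_last]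
  have h2 : ∀ k : Fin (m + 2), k.rev = 0 ↔ k = Fin.last (m + 1) := fun k => by
    rw [Fin.rev_eq_iff, Fin.rev_zero]
  have h4 : (0 : Fin (m + 2)) ≠ Fin.last (m + 1) := Fin.last_pos.ne
  have hv : ∀ i j, vw (fun i j => sideW z2 z4 z2 z4 i j)
      (fun i j => sideW z1 z3 z1 z3 j i.rev) (fun _ _ => 1) (asmMat e) i j =
      (if asmMat e i j = 0 ∧ pre (asmMat e i) j.succ = pre (fun i => asmMat e i j) i.succ then
        (if i = 0 then z1 else if i = Fin.last (m + 1) then z3 else 1) else 1) *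
      (if asmMat e i j = 0 ∧ pre (asmMat e i) j.succ ≠ pre (fun i => asmMat e i j) i.succ then
        (if j = 0 then z4 else if j = Fin.last (m + 1) then z2 else 1) else 1) := by
    intro i j
    have h5 : (if j = 0 then z4 else if j = Fin.last (m + 1) then z2 else 1) =
        sideW z2 z4 z2 z4 i j := by
      simp only [sideW, ite_self]
      by_cases hj : j = 0
      · subst hj; simp only [if_true, h4, if_false]
      · simp only [hj, if_false]
    have h6 : (if i = 0 then z1 else if i = Fin.last (m + 1) then z3 else 1) =
        sideW z1 z3 z1 z3 j i.rev := by
      simp only [sideW, ite_self, h1, h2]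
    rw [h5, h6]
    rcases h.1 i j with h7 | h7 | h7
    · simp [vw, h7]
    · by_cases h8 : pre (asmMat e i) j.succ = pre (fun i => asmMat e i j) i.succ <;>
        simp [vw, h7, h8]
    · simp [vw, h7]
  simp only [hv, prod_mul_distrib]
  rw [prod_ite_pow_boundary (fun i j => asmMat e i j = 0 ∧
      pre (asmMat e i) j.succ = pre (fun i => asmMat e i j) i.succ), prod_comm,
    prod_ite_pow_boundary (fun j i => asmMat e i j = 0 ∧
      pre (asmMat e i) j.succ ≠ pre (fun i => asmMat e i j) i.succ),
    card_row_zero h, card_row_last h, card_col_zero h, card_col_last h]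
  ring

theorem Zbarqua_eq_pfB (m : ℕ) (z1 z2 z3 z4 : R) :
    Zbarqua (m + 2) 1 1 z1 z2 z3 z4 = pfB m z1 z2 z3 z4 z1 z2 z3 z4 := by
  classical
  unfold Zbarqua pfB pf
  refine sum_congr rfl fun e _ => ?_
  split_ifs with h
  · rw [prod_vw_boundary h]
    simp only [one_pow, one_mul]
  · rfl

theorem Zopp_eq_pfB (m : ℕ) (z w : R) :
    Zopp (m + 2) 1 1 z w = pfB m z 1 w 1 z 1 w 1 := by
  rw [← Zbarqua_eq_pfB]
  simp only [Zopp, Zqua, Zbarqua, one_pow]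

end link

/-- The tuple with first entry `u`, last entry `v` and all other entries equal to `1`. -/
def ends {α : Type*} [One α] {m : ℕ} (u v : α) (i : Fin (m + 2)) : α :=
  if i = 0 then u else if i = Fin.last (m + 1) then v else 1

theorem ends_eq {α : Type*} [One α] {m : ℕ} (u v : α) :
    (ends u v : Fin (m + 2) → α) = Fin.cons u (Fin.snoc (fun _ : Fin m => 1) v) := by
  funext i
  refine Fin.cases (by simp [ends]) (fun i => ?_) i
  refine Fin.lastCases ?_ (fun i => ?_) i
  · simp [ends]
  · have : i.castSucc.succ ≠ Fin.last (m + 1) := by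
      rw [← Fin.succ_last, ne_eq, Fin.succ_inj]
      exact Fin.castSucc_ne_last i
    simp [ends, this]

theorem ends_rev {α : Type*} [One α] {m : ℕ} (u v : α) (i : Fin (m + 2)) :
    ends u v i.rev = ends v u i := by
  simp only [ends, Fin.rev_eq_iff, Fin.rev_zero, Fin.rev_last]
  rcases eq_or_ne i 0 with rfl | h
  · rw [if_neg Fin.last_pos.ne, if_pos rfl, if_pos rfl]
  · simp only [if_neg h]

theorem prod_ends {M : Type*} [CommMonoid M] {m : ℕ} (u v : M) :
    ∏ i, (ends u v : Fin (m + 2) → M) i = u * v := by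
  rw [ends_eq, Fin.prod_cons, Fin.prod_snoc, prod_const_one, one_mul]

theorem mset_map_ends {α β : Type*} [One α] [One β] {m : ℕ} (f : α → β) (hf : f 1 = 1) (u v : α) :
    mset (fun i : Fin (m + 2) => f (ends u v i)) =
      f u ::ₘ f v ::ₘ mset (fun _ : Fin m => (1 : β)) := by
  have h : (fun i : Fin (m + 2) => f (ends u v i)) =
      Fin.cons (f u) (Fin.snoc (fun _ : Fin m => (1 : β)) (f v)) := by
    rw [ends_eq]
    funext i
    refine Fin.cases rfl (fun i => ?_) i
    refine Fin.lastCases (by simp) (fun i => by simp [hf]) i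
  rw [h, mset_cons, mset_removeNth _ (Fin.last m)]
  simp

section specialization

variable {R : Type*} [CommRing R]

/-- The boundary partition function with the corner weights of the six-vertex model at a cube
root of unity. -/
noncomputable def pfC (m : ℕ) (z1 z2 z3 z4 : R) : R :=
  pfB m z1 z2 z3 z4 (z4 * z1 - z4 + 1) (z1 * z2 - z1 + 1) (z2 * z3 - z2 + 1) (z3 * z4 - z3 + 1)

theorem Zopp_eq_pfC (m : ℕ) (z w : R) : Zopp (m + 2) 1 1 z w = pfC m z 1 w 1 := by
  rw [Zopp_eq_pfB, pfC]
  congr 1 <;> ring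

theorem pfB_eq_pfC (m : ℕ) (z w : R) :
    pfB m 1 z w 1 1 z (z * w - z + 1) 1 = pfC m 1 z w 1 := by
  rw [pfC]
  congr 1 <;> ring

theorem ends_mul_ends_sub_left (z1 z2 z3 z4 : R) {m : ℕ} {i j : Fin (m + 2)}
    (h0 : ¬(i = 0 ∧ j = 0)) (hl : ¬(i = Fin.last (m + 1) ∧ j = Fin.last (m + 1))) :
    ends z1 z3 i * ends z4 z2 j - ends z1 z3 i + 1 =
      sideW z2 z4 (z1 * z2 - z1 + 1) (z3 * z4 - z3 + 1) i j := by
  have e3 : Fin.last (m + 1) ≠ 0 := Fin.last_pos.ne'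
  have e4 : 0 ≠ Fin.last (m + 1) := e3.symm
  rcases eq_or_ne i 0 with rfl | i0
  · rcases eq_or_ne j 0 with rfl | j0
    · exact absurd ⟨rfl, rfl⟩ h0
    · rcases eq_or_ne j (Fin.last (m + 1)) with rfl | jl
      · simp only [ends, sideW, if_true, if_neg e3]
      · simp only [ends, sideW, if_true, if_neg j0, if_neg jl]
        ring
  · rcases eq_or_ne i (Fin.last (m + 1)) with rfl | il
    · rcases eq_or_ne j 0 with rfl | j0
      · simp only [ends, sideW, if_true, if_neg e3, if_neg e4]
      · rcases eq_or_ne j (Fin.last (m + 1)) with rfl | jl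
        · exact absurd ⟨rfl, rfl⟩ hl
        · simp only [ends, sideW, if_true, if_neg e3, if_neg j0, if_neg jl]
          ring
    · rcases eq_or_ne j 0 with rfl | j0
      · simp only [ends, sideW, if_true, if_neg i0, if_neg il, if_neg e4]
        ring
      · rcases eq_or_ne j (Fin.last (m + 1)) with rfl | jl
        · simp only [ends, sideW, if_true, if_neg i0, if_neg il, if_neg e3]
          ring
        · simp only [ends, sideW, if_neg i0, if_neg il, if_neg j0, if_neg jl]
          ring

theorem ends_mul_ends_sub_right (z1 z2 z3 z4 : R) {m : ℕ} {i j : Fin (m + 2)}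
    (h0 : ¬(i = 0 ∧ j = Fin.last (m + 1))) (hl : ¬(i = Fin.last (m + 1) ∧ j = 0)) :
    ends z1 z3 i * ends z4 z2 j - ends z4 z2 j + 1 =
      sideW z1 z3 (z4 * z1 - z4 + 1) (z2 * z3 - z2 + 1) j i.rev := by
  have h := ends_mul_ends_sub_left z4 z1 z2 z3 (i := j) (j := i.rev)
    (fun h => hl ⟨by rw [← Fin.rev_rev i, h.2, Fin.rev_zero], h.1⟩)
    (fun h => h0 ⟨by rw [← Fin.rev_rev i, h.2, Fin.rev_last], h.1⟩)
  rw [← h, ends_rev, mul_comm]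

variable {K : Type*} [Field K]

/-- The spectral parameter producing the boundary weight `z`. -/
def spec (ω z : K) : K := (z + ω ^ 2) / (1 + ω ^ 2 * z)

/-- The gauge factor of the boundary weight `z`. -/
def gaug (ω z : K) : K := -ω / (1 + ω ^ 2 * z)

variable {ω : K} {z w : K}

theorem omega_isom_ne (hω : ω ^ 2 + ω + 1 = 0) : 1 + ω ^ 2 * 1 ≠ 0 := by
  have := omega_ne_zero hω
  grind

theorem spec_one (hω : ω ^ 2 + ω + 1 = 0) : spec ω 1 = 1 := by
  have h := omega_isom_ne hω
  rw [spec, div_eq_one_iff_eq h]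
  ring

theorem gaug_one (hω : ω ^ 2 + ω + 1 = 0) : gaug ω 1 = 1 := by
  have h := omega_isom_ne hω
  rw [gaug, div_eq_one_iff_eq h]
  linear_combination -hω

theorem wa_spec (hω : ω ^ 2 + ω + 1 = 0) (hz : 1 + ω ^ 2 * z ≠ 0) (hw : 1 + ω ^ 2 * w ≠ 0) :
    wa ω (spec ω z) (spec ω w) =
      (1 - ω ^ 2) * gaug ω z * gaug ω w * (z * w - z + 1) := by
  simp only [wa, spec, gaug]
  obtain ⟨p, hp⟩ : ∃ p, p = 1 + ω ^ 2 * z := ⟨_, rfl⟩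
  obtain ⟨q, hq⟩ : ∃ q, q = 1 + ω ^ 2 * w := ⟨_, rfl⟩
  rw [← hp] at hz ⊢
  rw [← hq] at hw ⊢
  field_simp
  rw [hp, hq]
  grind

theorem wb_spec (hω : ω ^ 2 + ω + 1 = 0) (hz : 1 + ω ^ 2 * z ≠ 0) (hw : 1 + ω ^ 2 * w ≠ 0) :
    wb ω (spec ω z) (spec ω w) =
      (1 - ω ^ 2) * gaug ω z * gaug ω w * (z * w - w + 1) := by
  simp only [wb, spec, gaug]
  obtain ⟨p, hp⟩ : ∃ p, p = 1 + ω ^ 2 * z := ⟨_, rfl⟩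
  obtain ⟨q, hq⟩ : ∃ q, q = 1 + ω ^ 2 * w := ⟨_, rfl⟩
  rw [← hp] at hz ⊢
  rw [← hq] at hw ⊢
  field_simp
  rw [hp, hq]
  grind

theorem spec_sub_spec (hω : ω ^ 2 + ω + 1 = 0) (hz : 1 + ω ^ 2 * z ≠ 0)
    (hw : 1 + ω ^ 2 * w ≠ 0) :
    spec ω z - spec ω w = (1 - ω) * ω * gaug ω z * gaug ω w * (z - w) := by
  simp only [spec, gaug]
  obtain ⟨p, hp⟩ : ∃ p, p = 1 + ω ^ 2 * z := ⟨_, rfl⟩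
  obtain ⟨q, hq⟩ : ∃ q, q = 1 + ω ^ 2 * w := ⟨_, rfl⟩
  rw [← hp] at hz ⊢
  rw [← hq] at hw ⊢
  field_simp
  rw [hp, hq]
  grind

theorem gaug_ne_zero (hω : ω ^ 2 + ω + 1 = 0) (hz : 1 + ω ^ 2 * z ≠ 0) : gaug ω z ≠ 0 :=
  div_ne_zero (neg_ne_zero.2 (omega_ne_zero hω)) hz

theorem one_sub_omega_sq_ne_zero (hω : ω ^ 2 + ω + 1 = 0) (h1 : ω ≠ 1) : 1 - ω ^ 2 ≠ 0 := by
  intro h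
  apply h1
  linear_combination (ω - 1) * hω + ω * h

theorem SV_const_one (hω : ω ^ 2 + ω + 1 = 0) (m : ℕ) :
    SV ω (fun _ : Fin (m + 1) => 1) (fun _ => 1) =
      (1 - ω ^ 2) ^ ((m + 1) * m) * numASM (m + 1) := by
  have h := pf_gauge (n := m) (fun _ _ => (1 : K)) (fun _ _ => 1) (fun _ _ => 1)
    (fun _ => 1 - ω ^ 2) (fun _ => 1)
  rw [pf_one, prod_const, prod_const_one, card_univ, Fintype.card_fin, one_pow, ← pow_mul] at h
  simp only [mul_one] at h
  rw [← h, SV]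
  have hc : (1 - ω ^ 2) ^ 2 = -(3 * ω ^ 2) := by grind
  simp [wa, wb, wc, hc]

theorem SV_spec_ends (hω : ω ^ 2 + ω + 1 = 0) (m : ℕ) {z1 z2 z3 z4 : K}
    (h1 : 1 + ω ^ 2 * z1 ≠ 0) (h2 : 1 + ω ^ 2 * z2 ≠ 0) (h3 : 1 + ω ^ 2 * z3 ≠ 0)
    (h4 : 1 + ω ^ 2 * z4 ≠ 0) :
    SV ω (fun i : Fin (m + 2) => spec ω (ends z1 z3 i)) (fun j => spec ω (ends z4 z2 j)) =
      (1 - ω ^ 2) ^ ((m + 2) * (m + 1)) *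
        (gaug ω z1 * gaug ω z2 * gaug ω z3 * gaug ω z4) ^ (m + 1) * pfC m z1 z2 z3 z4 := by
  have hD : ∀ {u v : K} (i : Fin (m + 2)), 1 + ω ^ 2 * u ≠ 0 → 1 + ω ^ 2 * v ≠ 0 →
      1 + ω ^ 2 * ends u v i ≠ 0 := by
    intro u v i hu hv
    unfold ends
    split_ifs
    exacts [hu, hv, omega_isom_ne hω]
  have hg : ∀ {u v : K}, ∏ i : Fin (m + 2), gaug ω (ends u v i) = gaug ω u * gaug ω v := by
    intro u v
    rw [← prod_ends (m := m)]
    refine prod_congr rfl fun i _ => ?_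
    unfold ends
    split_ifs
    exacts [rfl, rfl, gaug_one hω]
  have key := pf_gauge (n := m + 1)
    (fun i j => sideW z2 z4 (z1 * z2 - z1 + 1) (z3 * z4 - z3 + 1) i j)
    (fun i j => sideW z1 z3 (z4 * z1 - z4 + 1) (z2 * z3 - z2 + 1) j i.rev) (fun _ _ => 1)
    (fun i => (1 - ω ^ 2) * gaug ω (ends z1 z3 i)) (fun j => gaug ω (ends z4 z2 j))
  rw [prod_mul_distrib, hg, hg, prod_const, card_univ, Fintype.card_fin] at key
  have hpow : ((1 - ω ^ 2) ^ (m + 1 + 1) * (gaug ω z1 * gaug ω z3)) ^ (m + 1) *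
      (gaug ω z4 * gaug ω z2) ^ (m + 1) = (1 - ω ^ 2) ^ ((m + 2) * (m + 1)) *
        (gaug ω z1 * gaug ω z2 * gaug ω z3 * gaug ω z4) ^ (m + 1) := by
    rw [mul_pow, ← pow_mul, mul_assoc, ← mul_pow]
    congr 2
    ring
  rw [hpow] at key
  rw [pfC, pfB, ← key, SV]
  refine pf_congr_boundary (fun i j hi hj => ?_) (fun i j hi hj => ?_) (fun i j i0 il j0 jl => ?_)
  · rw [wa_spec hω (hD i h1 h3) (hD j h4 h2),
      ends_mul_ends_sub_left z1 z2 z3 z4 hi hj]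
  · rw [wb_spec hω (hD i h1 h3) (hD j h4 h2),
      ends_mul_ends_sub_right z1 z2 z3 z4 hi hj]
  · simp only [ends, i0, il, j0, jl, if_false, spec_one hω, gaug_one hω, wc]
    grind

theorem SV_spec (hω : ω ^ 2 + ω + 1 = 0) (h1 : ω ≠ 1) (m : ℕ) (hz : 1 + ω ^ 2 * z ≠ 0)
    (hw : 1 + ω ^ 2 * w ≠ 0) :
    SV ω (Fin.cons (spec ω z) (fun _ => 1) : Fin (m + 2) → K)
      (Fin.cons (spec ω w) (fun _ => 1) : Fin (m + 2) → K) =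
      (1 - ω ^ 2) ^ ((m + 2) * (m + 1)) * (gaug ω z * gaug ω w) ^ (m + 1) *
        Zopp (m + 2) 1 1 z w := by
  have ho := omega_isom_ne hω
  have h := SV_spec_ends hω m hz ho hw ho
  rw [gaug_one hω, mul_one, mul_one, ← Zopp_eq_pfC] at h
  rw [← h]
  refine SV_congr hω h1 ?_
  have hc : mset (fun _ : Fin (m + 1) => (1 : K)) = 1 ::ₘ mset (fun _ : Fin m => (1 : K)) := by
    rw [← mset_cons]
    congr 1
    funext i
    refine Fin.cases rfl (fun _ => rfl) i
  rw [mset_map_ends _ (spec_one hω), mset_map_ends _ (spec_one hω), mset_cons, mset_cons, hc,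
    spec_one hω]
  simp only [← Multiset.singleton_add]
  abel

theorem Zopp_comm (hω : ω ^ 2 + ω + 1 = 0) (h1 : ω ≠ 1) (m : ℕ) (hz : 1 + ω ^ 2 * z ≠ 0)
    (hw : 1 + ω ^ 2 * w ≠ 0) : Zopp (m + 2) 1 1 z w = Zopp (m + 2) 1 1 w z := by
  have h := SV_spec hω h1 m hz hw
  rw [SV_comm hω, SV_spec hω h1 m hw hz, mul_comm (gaug ω w)] at h
  refine (mul_left_cancel₀ (mul_ne_zero (pow_ne_zero _ (one_sub_omega_sq_ne_zero hω h1))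
    (pow_ne_zero _ (mul_ne_zero (gaug_ne_zero hω hz) (gaug_ne_zero hω hw)))) h).symm

theorem pfC_one_left (hω : ω ^ 2 + ω + 1 = 0) (h1 : ω ≠ 1) (m : ℕ) (hz : 1 + ω ^ 2 * z ≠ 0)
    (hw : 1 + ω ^ 2 * w ≠ 0) : pfC m 1 z w 1 = Zopp (m + 2) 1 1 z w := by
  have ho := omega_isom_ne hω
  have h := SV_spec_ends hω m ho hz hw ho
  rw [gaug_one hω, mul_one, one_mul] at h
  have h' := SV_spec hω h1 m hz hw
  rw [SV_congr hω h1 (x' := fun i : Fin (m + 2) => spec ω (ends 1 w i))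
    (y' := fun i => spec ω (ends 1 z i)), h] at h'
  · exact mul_left_cancel₀ (mul_ne_zero (pow_ne_zero _ (one_sub_omega_sq_ne_zero hω h1))
      (pow_ne_zero _ (mul_ne_zero (gaug_ne_zero hω hz) (gaug_ne_zero hω hw)))) h'
  have hc : mset (fun _ : Fin (m + 1) => (1 : K)) = 1 ::ₘ mset (fun _ : Fin m => (1 : K)) := by
    rw [← mset_cons]
    congr 1
    funext i
    refine Fin.cases rfl (fun _ => rfl) i
  rw [mset_map_ends _ (spec_one hω), mset_map_ends _ (spec_one hω), mset_cons, mset_cons, hc,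
    spec_one hω]
  simp only [← Multiset.singleton_add]
  abel

theorem pfC_mul_numASM (hω : ω ^ 2 + ω + 1 = 0) (ho : ω ≠ 1) (m : ℕ) {z1 z2 z3 z4 : K}
    (h1 : 1 + ω ^ 2 * z1 ≠ 0) (h2 : 1 + ω ^ 2 * z2 ≠ 0) (h3 : 1 + ω ^ 2 * z3 ≠ 0)
    (h4 : 1 + ω ^ 2 * z4 ≠ 0) :
    pfC (m + 1) z1 z2 z3 z4 * numASM (m + 1) * ((z1 - z3) * (z2 - z4)) =
      (z1 * z2 - z1 + 1) * (z1 * z2 - z2 + 1) * (z3 * z4 - z3 + 1) * (z3 * z4 - z4 + 1) *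
          Zopp (m + 2) 1 1 z4 z1 * Zopp (m + 2) 1 1 z2 z3 -
        (z4 * z1 - z4 + 1) * (z4 * z1 - z1 + 1) * (z2 * z3 - z2 + 1) * (z2 * z3 - z3 + 1) *
          Zopp (m + 2) 1 1 z1 z2 * Zopp (m + 2) 1 1 z3 z4 := by
  have q := quadRel (m + 1) hω ho (spec ω z1) (spec ω z2) (spec ω z3) (spec ω z4)
    (fun _ => 1) (fun _ => 1)
  have hb := SV_spec_ends hω (m + 1) h1 h2 h3 h4
  rw [SV_congr hω ho (x' := (Fin.cons (spec ω z1) (Fin.cons (spec ω z3) (fun _ => 1) :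
      Fin (m + 2) → K) : Fin (m + 3) → K)) (y' := (Fin.cons (spec ω z2)
      (Fin.cons (spec ω z4) (fun _ => 1) : Fin (m + 2) → K) : Fin (m + 3) → K)) (by
    rw [mset_map_ends _ (spec_one hω), mset_map_ends _ (spec_one hω)]
    simp only [mset_cons, ← Multiset.singleton_add]
    abel)] at hb
  unfold QuadRel at q
  rw [hb, SV_const_one hω, SV_spec hω ho m h1 h4, SV_spec hω ho m h2 h3, SV_spec hω ho m h1 h2,
    SV_spec hω ho m h3 h4, spec_sub_spec hω h1 h3, spec_sub_spec hω h2 h4] at q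
  simp only [wg, wa_spec hω h1 h2, wb_spec hω h1 h2, wa_spec hω h3 h4, wb_spec hω h3 h4,
    wa_spec hω h1 h4, wb_spec hω h1 h4, wa_spec hω h2 h3, wb_spec hω h2 h3] at q
  rw [Zopp_comm hω ho m h4 h1]
  have hκ := one_sub_omega_sq_ne_zero hω ho
  have hg1 := gaug_ne_zero hω h1
  have hg2 := gaug_ne_zero hω h2
  have hg3 := gaug_ne_zero hω h3
  have hg4 := gaug_ne_zero hω h4
  have hκ2 : ω ^ 2 * ((1 - ω) * ω) ^ 2 = (1 - ω ^ 2) ^ 2 := by grind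
  generalize 1 - ω ^ 2 = κ at *
  generalize gaug ω z1 = g1 at *
  generalize gaug ω z2 = g2 at *
  generalize gaug ω z3 = g3 at *
  generalize gaug ω z4 = g4 at *
  have hne : κ ^ (2 * ((m + 2) * (m + 1)) + 4) * (g1 * g2 * g3 * g4) ^ (m + 3) ≠ 0 := by
    positivity
  refine mul_left_cancel₀ hne ?_
  have e : κ ^ (2 * ((m + 2) * (m + 1)) + 4) =
      κ ^ ((m + 3) * (m + 2)) * κ ^ ((m + 1) * m) * κ ^ 2 := by
    rw [← pow_add, ← pow_add]
    congr 1
    ring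
  calc _ = κ ^ ((m + 3) * (m + 2)) * κ ^ ((m + 1) * m) * κ ^ 2 * (g1 * g2 * g3 * g4) ^ (m + 3) *
      (pfC (m + 1) z1 z2 z3 z4 * numASM (m + 1) * ((z1 - z3) * (z2 - z4))) := by rw [e]
    _ = _ := by
      rw [← hκ2]
      refine Eq.trans ?_ (q.trans ?_)
      · ring
      · ring

end specialization

section main

theorem Zbarqua_identity {K : Type*} [Field K] {ω : K} (hω : ω ^ 2 + ω + 1 = 0) (ho : ω ≠ 1)
    (m : ℕ) {z1 z2 z3 z4 : K}
    (h1 : 1 + ω ^ 2 * z1 ≠ 0) (h2 : 1 + ω ^ 2 * z2 ≠ 0) (h3 : 1 + ω ^ 2 * z3 ≠ 0)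
    (h4 : 1 + ω ^ 2 * z4 ≠ 0) (h13 : z1 ≠ z3) (h24 : z2 ≠ z4) (hA : (numASM (m + 1) : K) ≠ 0) :
    (z4 * z1 - z4 + 1) * (z1 * z2 - z1 + 1) * (z2 * z3 - z2 + 1) *
        (z3 * z4 - z3 + 1) * Zbarqua (m + 3) 1 1 z1 z2 z3 z4 =
      (z1 * z2 * z3 * z4 / ((numASM (m + 1) : K) * (z1 - z3) * (z2 - z4))) *
        ((z1 * z2 - z1 + 1) * (z1 * z2 - z2 + 1) * (z3 * z4 - z3 + 1) * (z3 * z4 - z4 + 1) *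
            Zopp (m + 2) 1 1 z4 z1 * Zopp (m + 2) 1 1 z2 z3 -
         (z4 * z1 - z4 + 1) * (z4 * z1 - z1 + 1) * (z2 * z3 - z2 + 1) * (z2 * z3 - z3 + 1) *
            Zopp (m + 2) 1 1 z1 z2 * Zopp (m + 2) 1 1 z3 z4)
      + (z2 - 1) * (z3 - 1) * (z1 * z2 - z1 + 1) * (z3 * z4 - z3 + 1) *
          z4 * z1 * z2 ^ (m + 2) * Zopp (m + 2) 1 1 z4 z1
      + (z3 - 1) * (z4 - 1) * (z2 * z3 - z2 + 1) * (z4 * z1 - z4 + 1) *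
          z1 * z2 * z3 ^ (m + 2) * Zopp (m + 2) 1 1 z1 z2
      + (z4 - 1) * (z1 - 1) * (z3 * z4 - z3 + 1) * (z1 * z2 - z1 + 1) *
          z2 * z3 * z4 ^ (m + 2) * Zopp (m + 2) 1 1 z2 z3
      + (z1 - 1) * (z2 - 1) * (z4 * z1 - z4 + 1) * (z2 * z3 - z2 + 1) *
          z3 * z4 * z1 ^ (m + 2) * Zopp (m + 2) 1 1 z3 z4
      + (z1 - 1) * (z2 - 1) * (z3 - 1) * (z4 - 1) *
          ((z1 * z2 - z1 + 1) * (z3 * z4 - z3 + 1) * (z2 * z4) ^ (m + 2) +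
           (z2 * z3 - z2 + 1) * (z4 * z1 - z4 + 1) * (z1 * z3) ^ (m + 2)) *
          (numASM (m + 1) : K) := by
  rw [← pfC_mul_numASM hω ho m h1 h2 h3 h4]
  have hd : (numASM (m + 1) : K) * (z1 - z3) * (z2 - z4) ≠ 0 :=
    mul_ne_zero (mul_ne_zero hA (sub_ne_zero.2 h13)) (sub_ne_zero.2 h24)
  have hmid : z1 * z2 * z3 * z4 / ((numASM (m + 1) : K) * (z1 - z3) * (z2 - z4)) *
      (pfC (m + 1) z1 z2 z3 z4 * numASM (m + 1) * ((z1 - z3) * (z2 - z4))) =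
      z1 * z2 * z3 * z4 * pfC (m + 1) z1 z2 z3 z4 := by
    rw [div_mul_eq_mul_div, div_eq_iff hd]
    ring
  have e := pfB_expand m z1 z2 z3 z4 (z4 * z1 - z4 + 1) (z1 * z2 - z1 + 1) (z2 * z3 - z2 + 1)
    (z3 * z4 - z3 + 1)
  rw [pfB_eq_pfC, pfB_eq_pfC, pfB_eq_pfC, pfB_eq_pfC, pfC_one_left hω ho m h4 h1,
    pfC_one_left hω ho m h1 h2, pfC_one_left hω ho m h2 h3, pfC_one_left hω ho m h3 h4,
    ← Zbarqua_eq_pfB, ← pfC] at e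
  rw [hmid]
  linear_combination e

variable {R S : Type*} [CommRing R] [CommRing S]

theorem map_Zbarqua (f : R →+* S) (n : ℕ) (z1 z2 z3 z4 : R) :
    f (Zbarqua n 1 1 z1 z2 z3 z4) = Zbarqua n 1 1 (f z1) (f z2) (f z3) (f z4) := by
  simp only [Zbarqua, map_sum, apply_ite f, map_mul, map_pow, map_one, map_zero]

theorem map_Zopp (f : R →+* S) (n : ℕ) (z1 z2 : R) :
    f (Zopp n 1 1 z1 z2) = Zopp n 1 1 (f z1) (f z2) := by
  simp only [Zopp, Zqua, map_sum, apply_ite f, map_mul, map_pow, map_one, map_zero]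

theorem numASM_ne_zero (n : ℕ) : numASM n ≠ 0 := by
  classical
  refine (card_pos.2 ⟨fun i j => if i = j then 2 else 1, ?_⟩).ne'
  have h : asmMat (fun i j : Fin n => if i = j then (2 : Fin 3) else 1) =
      fun i j => if i = j then 1 else 0 := by
    funext i j
    simp only [asmMat]
    split_ifs <;> rfl
  rw [mem_filter, h]
  refine ⟨mem_univ _, fun i j => ?_, fun i j => ?_, fun i j => ?_, fun i => ?_, fun j => ?_⟩
  · dsimp only
    split_ifs <;> simp
  · rw [sum_ite_eq]
    split_ifs <;> simp
  · rw [sum_ite_eq']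
    split_ifs <;> simp
  · simp
  · simp

theorem K4_var_isom_ne (i : Fin 4) :
    (algebraMap (MvPolynomial (Fin 4) ℚ) K4 (MvPolynomial.X i)) ^ 2 -
      algebraMap (MvPolynomial (Fin 4) ℚ) K4 (MvPolynomial.X i) + 1 ≠ 0 := by
  intro h
  rw [← map_pow, ← map_sub, ← map_one (algebraMap (MvPolynomial (Fin 4) ℚ) K4), ← map_add,
    map_eq_zero_iff _ (IsFractionRing.injective _ _)] at h
  have := congrArg (MvPolynomial.eval fun _ => (0 : ℚ)) h
  simp at this

theorem one_add_omega_sq_mul_ne_zero {K L : Type*} [Field K] [Field L] (f : K →+* L) {ω : L}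
    (hω : ω ^ 2 + ω + 1 = 0) {z : K} (hz : z ^ 2 - z + 1 ≠ 0) : 1 + ω ^ 2 * f z ≠ 0 := by
  intro h
  refine hz (f.injective ?_)
  rw [map_add, map_sub, map_pow, map_one, map_zero]
  have : f z = -ω := by linear_combination ω * h - (ω - 1) * f z * hω
  rw [this]
  linear_combination hω

theorem exists_omega (L : Type*) [Field L] [IsAlgClosed L] : ∃ ω : L, ω ^ 2 + ω + 1 = 0 := by
  open Polynomial in
  obtain ⟨ω, h⟩ := IsAlgClosed.exists_root (X ^ 2 + X + 1 : L[X]) (by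
    have : (X ^ 2 + X + 1 : L[X]).degree = 2 := by compute_degree!
    rw [this]
    decide)
  exact ⟨ω, by simpa using h⟩

end main

/-- Identity for the alternative quadruply-refined ASM generating function at
`x = y = 1`, as an identity in the field of rational functions
`ℚ(z1,z2,z3,z4)`, where `numASM m` is the number of ASMs of size `m`. -/
theorem stmt10 (n : ℕ) (hn : 3 ≤ n) :
    (vz4 * vz1 - vz4 + 1) * (vz1 * vz2 - vz1 + 1) * (vz2 * vz3 - vz2 + 1) *
        (vz3 * vz4 - vz3 + 1) * Zbarqua n (1 : K4) 1 vz1 vz2 vz3 vz4 =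
      (vz1 * vz2 * vz3 * vz4 /
          ((numASM (n - 2) : K4) * (vz1 - vz3) * (vz2 - vz4))) *
        ((vz1 * vz2 - vz1 + 1) * (vz1 * vz2 - vz2 + 1) * (vz3 * vz4 - vz3 + 1) *
            (vz3 * vz4 - vz4 + 1) *
            Zopp (n - 1) (1 : K4) 1 vz4 vz1 * Zopp (n - 1) (1 : K4) 1 vz2 vz3 -
         (vz4 * vz1 - vz4 + 1) * (vz4 * vz1 - vz1 + 1) * (vz2 * vz3 - vz2 + 1) *
            (vz2 * vz3 - vz3 + 1) *
            Zopp (n - 1) (1 : K4) 1 vz1 vz2 * Zopp (n - 1) (1 : K4) 1 vz3 vz4)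
      + (vz2 - 1) * (vz3 - 1) * (vz1 * vz2 - vz1 + 1) * (vz3 * vz4 - vz3 + 1) *
          vz4 * vz1 * vz2 ^ (n - 1) * Zopp (n - 1) (1 : K4) 1 vz4 vz1
      + (vz3 - 1) * (vz4 - 1) * (vz2 * vz3 - vz2 + 1) * (vz4 * vz1 - vz4 + 1) *
          vz1 * vz2 * vz3 ^ (n - 1) * Zopp (n - 1) (1 : K4) 1 vz1 vz2
      + (vz4 - 1) * (vz1 - 1) * (vz3 * vz4 - vz3 + 1) * (vz1 * vz2 - vz1 + 1) *
          vz2 * vz3 * vz4 ^ (n - 1) * Zopp (n - 1) (1 : K4) 1 vz2 vz3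
      + (vz1 - 1) * (vz2 - 1) * (vz4 * vz1 - vz4 + 1) * (vz2 * vz3 - vz2 + 1) *
          vz3 * vz4 * vz1 ^ (n - 1) * Zopp (n - 1) (1 : K4) 1 vz3 vz4
      + (vz1 - 1) * (vz2 - 1) * (vz3 - 1) * (vz4 - 1) *
          ((vz1 * vz2 - vz1 + 1) * (vz3 * vz4 - vz3 + 1) * (vz2 * vz4) ^ (n - 1) +
           (vz2 * vz3 - vz2 + 1) * (vz4 * vz1 - vz4 + 1) * (vz1 * vz3) ^ (n - 1)) *
          (numASM (n - 2) : K4) := by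
  obtain ⟨m, rfl⟩ : ∃ m, n = m + 3 := ⟨n - 3, by omega⟩
  have e1 : m + 3 - 1 = m + 2 := rfl
  have e2 : m + 3 - 2 = m + 1 := rfl
  rw [e1, e2]
  have hinj : ∀ i j : Fin 4, i ≠ j → algebraMap (MvPolynomial (Fin 4) ℚ) K4 (MvPolynomial.X i) ≠
      algebraMap (MvPolynomial (Fin 4) ℚ) K4 (MvPolynomial.X j) := fun i j hij h =>
    hij (MvPolynomial.X_injective (IsFractionRing.injective _ _ h))
  obtain ⟨ω, hω⟩ := exists_omega (AlgebraicClosure K4)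
  have ho : ω ≠ 1 := by
    rintro rfl
    norm_num at hω
  let f := algebraMap K4 (AlgebraicClosure K4)
  have hf : Function.Injective f := f.injective
  have key := Zbarqua_identity hω ho m
    (one_add_omega_sq_mul_ne_zero f hω (K4_var_isom_ne 0))
    (one_add_omega_sq_mul_ne_zero f hω (K4_var_isom_ne 1))
    (one_add_omega_sq_mul_ne_zero f hω (K4_var_isom_ne 2))
    (one_add_omega_sq_mul_ne_zero f hω (K4_var_isom_ne 3))
    (hf.ne (hinj 0 2 (by decide))) (hf.ne (hinj 1 3 (by decide)))
    (Nat.cast_ne_zero.2 (numASM_ne_zero (m + 1)))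
  refine hf ?_
  simp only [map_Zopp, map_Zbarqua, map_natCast, map_one, map_mul, map_sub,
    map_add, map_pow, map_div₀]
  exact key
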